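/- arXiv:1704.02413 — 2 statements merged into one kernel-verified Lean document; each statement's English description precedes it below -/
import Mathlib

section
/- Let λ = λ^0 + lλ̄ be a partition which is not l-restricted (i.e. λ̄ ≠ 0), where λ^0 is l-restricted and λ̄ is a partition, and assume ℓ(λ̄) ≤ ℓ(λ^0). Set μ = (λ^0)' and assume μ is edge l-disconnected. Then there exists an index i such that: (i) S = (i, λ_i) is a suitable node of λ, S_0 = (i, λ^0_i) is a suitable node of λ^0, and the partition (λ^0)_{S_0} is l-restricted; and (ii) R = (λ^0_i, i) is a co-suitable node of μ such that μ_R is l-regular and ℓ(Mull(μ)) = ℓ(Mull(μ_R)). -/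
noncomputable section

/-- `p : ℕ → ℕ` represents the partition `λ` with `p i = λ_{i+1}` (0-indexed parts):
a weakly decreasing, eventually zero sequence. -/
def IsPartition (p : ℕ → ℕ) : Prop :=
  (∀ i j, i ≤ j → p j ≤ p i) ∧ ∃ N, ∀ i, N ≤ i → p i = 0

/-- `ℓ(λ)`, the number of nonzero parts. -/
def plen (p : ℕ → ℕ) : ℕ := sInf {N | p N = 0}

/-- the degree (number of boxes) of the partition. -/
def pdeg (p : ℕ → ℕ) : ℕ := ∑ i ∈ Finset.range (plen p), p i

/-- `λ` is `l`-regular: no `l` consecutive parts are equal and nonzero. -/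
def IsLRegular (l : ℕ) (p : ℕ → ℕ) : Prop :=
  ∀ i, p i ≠ 0 → p (i + l - 1) ≠ p i

/-- `λ` is `l`-restricted: `λ_i - λ_{i+1} < l` for all `i`. -/
def IsLRestricted (l : ℕ) (p : ℕ → ℕ) : Prop :=
  ∀ i, p i - p (i + 1) < l

/-- the transpose (conjugate) partition. -/
def conjP (p : ℕ → ℕ) : ℕ → ℕ :=
  fun j => ((Finset.range (plen p)).filter fun i => j < p i).card

/-- the minimal `h ≥ 1` with `λ_1 - λ_{h+1} + h ≥ l`: when `e(λ) > l`, the first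
`l`-segment of the `l`-edge lies in rows `1, …, h`. -/
def firstSeg (l : ℕ) (p : ℕ → ℕ) : ℕ := sInf {h | 1 ≤ h ∧ l ≤ p 0 - p h + h}

/-- removal of the `l`-edge (with fuel): if `e(λ) ≤ l` the whole edge is removed,
otherwise the first `l`-segment is removed from rows `1, …, h` (`h = firstSeg`) and one
recurses on `(λ_{h+1}, λ_{h+2}, …)`. -/
def removeLEdgeAux (l : ℕ) : ℕ → (ℕ → ℕ) → ℕ → ℕ
  | 0, _ => fun _ => 0
  | n + 1, p =>
    if p 0 = 0 then fun _ => 0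
    else if p 0 + plen p - 1 ≤ l then fun i => p (i + 1) - 1
    else fun i =>
      if i + 1 < firstSeg l p then p (i + 1) - 1
      else if i + 1 = firstSeg l p then p 0 + firstSeg l p - 1 - l
      else removeLEdgeAux l n (fun j => p (j + firstSeg l p)) (i - firstSeg l p)

/-- the partition obtained by removing the `l`-edge of `λ`. -/
def removeLEdge (l : ℕ) (p : ℕ → ℕ) : ℕ → ℕ := removeLEdgeAux l (plen p) p

/-- `e_l(λ)`, the number of nodes of the `l`-edge. -/
def elen (l : ℕ) (p : ℕ → ℕ) : ℕ := pdeg p - pdeg (removeLEdge l p)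

/-- the length of `Mull(λ)` prescribed by the defining recursion of the Mullineux map. -/
def mullLen (l : ℕ) (p : ℕ → ℕ) : ℕ :=
  if l ∣ elen l p then elen l p - plen p else elen l p - plen p + 1

/-- the Mullineux map (with fuel): `Mull(0) = 0` and, for `λ ≠ 0` `l`-regular with `ν`
obtained from `λ` by removing the `l`-edge, `Mull(λ)` is the unique `l`-regular partition
whose `l`-edge removal leaves `Mull(ν)` and whose length is `e_l(λ) - ℓ(λ)` if
`l ∣ e_l(λ)` and `e_l(λ) - ℓ(λ) + 1` otherwise. -/
def mullAux (l : ℕ) : ℕ → (ℕ → ℕ) → ℕ → ℕ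
  | 0, _ => fun _ => 0
  | n + 1, p =>
    if p 0 = 0 then fun _ => 0
    else
      Classical.epsilon fun μ : ℕ → ℕ =>
        IsPartition μ ∧ IsLRegular l μ ∧
          removeLEdge l μ = mullAux l n (removeLEdge l p) ∧ plen μ = mullLen l p

/-- the Mullineux map. -/
def mull (l : ℕ) (p : ℕ → ℕ) : ℕ → ℕ := mullAux l (pdeg p) p

/-- the list of Mullineux components (with fuel). -/
def mullCompsAux (l : ℕ) : ℕ → (ℕ → ℕ) → List (ℕ → ℕ)
  | 0, _ => []
  | n + 1, p =>
    if p 0 = 0 then []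
    else if elen l p ≤ l then [p]
    else (fun i => if i < firstSeg l p then p i else 0) ::
      mullCompsAux l n (fun j => p (j + firstSeg l p))

/-- the Mullineux components of `λ`. -/
def mullComps (l : ℕ) (p : ℕ → ℕ) : List (ℕ → ℕ) := mullCompsAux l (plen p) p

/-- edge `l`-connectedness (with fuel): consecutive Mullineux components `α, ρ` satisfy
`α_1 - ρ_1 + ℓ(α) = l`. -/
def edgeConnAux (l : ℕ) : ℕ → (ℕ → ℕ) → Prop
  | 0, _ => True
  | n + 1, p =>
    if elen l p ≤ l then True
    else p 0 + firstSeg l p = l + p (firstSeg l p) ∧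
      edgeConnAux l n fun j => p (j + firstSeg l p)

/-- `λ` is edge `l`-connected. -/
def EdgeLConnected (l : ℕ) (p : ℕ → ℕ) : Prop := edgeConnAux l (plen p) p

/-- the node `(i+1, λ_{i+1})` (in row `i+1`, 1-indexed) is a removable node. -/
def Removable (p : ℕ → ℕ) (i : ℕ) : Prop := p (i + 1) < p i

/-- removal of the removable node in row `i+1`. -/
def removeNode (p : ℕ → ℕ) (i : ℕ) : ℕ → ℕ := fun k => if k = i then p i - 1 else p k

/-- there is an addable node `(i+1, λ_{i+1} + 1)` in row `i+1` (1-indexed). -/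
def Addable (p : ℕ → ℕ) (i : ℕ) : Prop := i ≤ plen p ∧ (i = 0 ∨ p i < p (i - 1))

/-- the removable node in row `i+1` is suitable: its residue (mod `l`) differs from the
residue of every lower addable node. -/
def Suitable (l : ℕ) (p : ℕ → ℕ) (i : ℕ) : Prop :=
  Removable p i ∧ ∀ j, i < j → Addable p j →
    ¬ ((p j : ℤ) - (j : ℤ) ≡ (p i : ℤ) - (i : ℤ) - 1 [ZMOD (l : ℤ)])

/-- the removable node in row `i+1` is co-suitable: its transpose node is a suitable
node of the transpose partition. -/
def CoSuitable (l : ℕ) (p : ℕ → ℕ) (i : ℕ) : Prop :=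
  Removable p i ∧ Suitable l (conjP p) (p i - 1)

/-- `Φ_m`: partitions with at most `m` parts and `λ_1 - λ_m ≤ l - m`. -/
def Phi (l m : ℕ) : Set (ℕ → ℕ) :=
  {p | IsPartition p ∧ plen p ≤ m ∧ p 0 - p (m - 1) ≤ l - m}

/-- `λ` is `m`-distinguished: `λ = λ⁰ + lλ̄` with
`λ⁰ = ((l-m)^k, a_1, …, a_m)`, `l - m > a_1 ≥ … ≥ a_m ≥ 0`, and `λ̄` a partition with
`λ̄_1 ≤ m - 1`. -/
def IsDistinguished (l m : ℕ) (p : ℕ → ℕ) : Prop :=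
  ∃ (k : ℕ) (a : ℕ → ℕ) (pb : ℕ → ℕ),
    IsPartition pb ∧ pb 0 < m ∧
    (∀ i j, i ≤ j → a j ≤ a i) ∧ a 0 < l - m ∧ (∀ i, m ≤ i → a i = 0) ∧
    ∀ i, p i = (if i < k then l - m else a (i - k)) + l * pb i

/-- `q` is obtained from `p` by removing a skew `l`-hook (spanning rows `a+1, …, b+1`,
1-indexed). -/
def IsHookRemoval (l : ℕ) (p q : ℕ → ℕ) : Prop :=
  IsPartition q ∧ ∃ a b : ℕ, a ≤ b ∧
    (∀ i, i < a → q i = p i) ∧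
    (∀ i, a ≤ i → i < b → q i + 1 = p (i + 1)) ∧
    q b + l = p a + (b - a) ∧
    ∀ i, b < i → q i = p i

/-- `q` is the `l`-core of `p`: obtained by repeatedly removing skew `l`-hooks until
none remain. -/
def IsCoreOf (l : ℕ) (p q : ℕ → ℕ) : Prop :=
  Relation.ReflTransGen (fun x y => IsHookRemoval l x y) p q ∧ ∀ r, ¬ IsHookRemoval l q r

/-- the `l`-core of `p`. -/
def lCore (l : ℕ) (p : ℕ → ℕ) : ℕ → ℕ := Classical.epsilon (IsCoreOf l p)



/-- the partition with the first `h` rows deleted. -/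
def shf (p : ℕ → ℕ) (h : ℕ) : ℕ → ℕ := fun j => p (j + h)

theorem shf_apply (p : ℕ → ℕ) (h j : ℕ) : shf p h j = p (j + h) := rfl

theorem shf_shf (p : ℕ → ℕ) (u g : ℕ) : shf (shf p u) g = shf p (u + g) := by
  funext j; simp only [shf_apply]; congr 1; omega

theorem IsPartition.shf {p : ℕ → ℕ} (hp : IsPartition p) (h : ℕ) : IsPartition (shf p h) := by
  obtain ⟨h1, N, hN⟩ := hp
  exact ⟨fun i j hij => h1 _ _ (by omega), N, fun i hi => hN _ (by omega)⟩

theorem lt_plen {p : ℕ → ℕ} (hp : IsPartition p) (i : ℕ) : i < plen p ↔ p i ≠ 0 := by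
  obtain ⟨h1, N, hN⟩ := hp
  have hne : {N | p N = 0}.Nonempty := ⟨N, hN N le_rfl⟩
  have hm : p (plen p) = 0 := Nat.sInf_mem hne
  constructor
  · intro h h0
    exact absurd (Nat.sInf_le (show i ∈ {N | p N = 0} from h0)) (by unfold plen at h; omega)
  · intro h
    by_contra hc
    have := h1 (plen p) i (by omega)
    omega

theorem plen_eq {p : ℕ → ℕ} (hp : IsPartition p) (n : ℕ) (h : ∀ i, i < n ↔ p i ≠ 0) :
    plen p = n := by
  have h1 := (lt_plen hp n).trans (h n).symm
  have h2 := (h (plen p)).trans (lt_plen hp (plen p)).symm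
  omega

theorem plen_shf {p : ℕ → ℕ} (hp : IsPartition p) (h : ℕ) : plen (shf p h) = plen p - h := by
  apply plen_eq (hp.shf h)
  intro i
  rw [shf_apply, ← lt_plen hp]
  omega

theorem plen_pos {p : ℕ → ℕ} (hp : IsPartition p) : 0 < plen p ↔ p 0 ≠ 0 := lt_plen hp 0

theorem isPartition_zero : IsPartition (fun _ => 0) := ⟨fun _ _ _ => le_rfl, 0, fun _ _ => rfl⟩

theorem eq_zero_of {p : ℕ → ℕ} (hp : IsPartition p) (h : p 0 = 0) : p = fun _ => 0 := by
  funext i; have := hp.1 0 i (Nat.zero_le _); omega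

theorem plen_zero : plen (fun _ => 0) = 0 :=
  plen_eq isPartition_zero 0 (fun i => by simp)

theorem firstSeg_spec (l : ℕ) (p : ℕ → ℕ) :
    1 ≤ firstSeg l p ∧ l ≤ p 0 - p (firstSeg l p) + firstSeg l p := by
  have : ({h | 1 ≤ h ∧ l ≤ p 0 - p h + h} : Set ℕ).Nonempty := ⟨l + 1, by
    refine ⟨by omega, by omega⟩⟩
  exact Nat.sInf_mem this

theorem firstSeg_min (l : ℕ) (p : ℕ → ℕ) (i : ℕ) (h1 : 1 ≤ i) (h : i < firstSeg l p) :
    p 0 - p i + i < l := by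
  by_contra hc
  exact absurd (Nat.sInf_le (show i ∈ {h | 1 ≤ h ∧ l ≤ p 0 - p h + h} from ⟨h1, by omega⟩))
    (by unfold firstSeg at h; omega)

theorem firstSeg_eq (l : ℕ) (p : ℕ → ℕ) (h : ℕ) (h1 : 1 ≤ h) (h2 : l ≤ p 0 - p h + h)
    (h3 : ∀ i, 1 ≤ i → i < h → p 0 - p i + i < l) : firstSeg l p = h := by
  have a := firstSeg_spec l p
  rcases lt_trichotomy (firstSeg l p) h with hc | hc | hc
  · have := h3 _ a.1 hc; omega
  · exact hc
  · have := firstSeg_min l p h h1 hc; omega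

/-- basic inequalities for the first segment of a partition with `e > l`. -/
theorem seg_basic {l : ℕ} {p : ℕ → ℕ} (hp : IsPartition p)
    (he : l < p 0 + plen p - 1) :
    1 ≤ firstSeg l p ∧ l + p (firstSeg l p) ≤ p 0 + firstSeg l p ∧
    (∀ i, 1 ≤ i → i < firstSeg l p → p 0 + i < l + p i) ∧
    firstSeg l p ≤ plen p ∧ l + 1 ≤ p 0 + firstSeg l p := by
  have a := firstSeg_spec l p
  have b := firstSeg_min l p
  have m : ∀ i, p i ≤ p 0 := fun i => hp.1 0 i (Nat.zero_le _)
  have c : ∀ i, 1 ≤ i → i < firstSeg l p → p 0 + i < l + p i := by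
    intro i h1 h2; have := b i h1 h2; have := m i; omega
  have d : firstSeg l p ≤ plen p := by
    by_contra hc
    rcases Nat.eq_zero_or_pos (plen p) with h0 | h0
    · have := mt (plen_pos hp).2; simp [h0] at this; omega
    · have := c (plen p) h0 (by omega)
      have h2 := mt (lt_plen hp (plen p)).2 (lt_irrefl _)
      simp at h2; omega
  refine ⟨a.1, by have := m (firstSeg l p); omega, c, d, ?_⟩
  have := m (firstSeg l p)
  rcases Nat.eq_zero_or_pos (p (firstSeg l p)) with h0 | h0
  · have h2 := mt (lt_plen hp (firstSeg l p)).1 (by simp [h0])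
    omega
  · omega

theorem aux_fuel (l : ℕ) : ∀ n m p, IsPartition p → plen p ≤ n → plen p ≤ m →
    removeLEdgeAux l n p = removeLEdgeAux l m p := by
  intro n
  induction n with
  | zero =>
    intro m p hp hn hm
    have h0 : p 0 = 0 := by have := mt (plen_pos hp).2; simp at this; omega
    cases m <;> simp [removeLEdgeAux, h0]
  | succ n ih =>
    intro m p hp hn hm
    by_cases h0 : p 0 = 0
    · cases m <;> simp [removeLEdgeAux, h0]
    · have hpos := (plen_pos hp).2 h0
      obtain ⟨m, rfl⟩ : ∃ k, m = k + 1 := ⟨m - 1, by omega⟩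
      have hs := plen_shf hp (firstSeg l p)
      have h1 := (firstSeg_spec l p).1
      have := ih m (shf p (firstSeg l p)) (hp.shf _) (by omega) (by omega)
      unfold shf at this
      simp only [removeLEdgeAux, this]

theorem rem_zero {l : ℕ} {p : ℕ → ℕ} (h : p 0 = 0) : removeLEdge l p = fun _ => 0 := by
  unfold removeLEdge
  cases plen p <;> simp [removeLEdgeAux, h]

theorem rem_small {l : ℕ} {p : ℕ → ℕ} (hp : IsPartition p) (h : p 0 ≠ 0)
    (he : p 0 + plen p - 1 ≤ l) (i : ℕ) : removeLEdge l p i = p (i + 1) - 1 := by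
  have hpos := (plen_pos hp).2 h
  obtain ⟨m, hm⟩ : ∃ k, plen p = k + 1 := ⟨plen p - 1, by omega⟩
  unfold removeLEdge
  rw [hm, removeLEdgeAux, if_neg h, if_pos he]

theorem rem_big {l : ℕ} {p : ℕ → ℕ} (hp : IsPartition p) (h : p 0 ≠ 0)
    (he : l < p 0 + plen p - 1) (i : ℕ) : removeLEdge l p i =
      if i + 1 < firstSeg l p then p (i + 1) - 1
      else if i + 1 = firstSeg l p then p 0 + firstSeg l p - 1 - l
      else removeLEdge l (shf p (firstSeg l p)) (i - firstSeg l p) := by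
  have hpos := (plen_pos hp).2 h
  obtain ⟨m, hm⟩ : ∃ k, plen p = k + 1 := ⟨plen p - 1, by omega⟩
  have h1 := (firstSeg_spec l p).1
  have hs := plen_shf hp (firstSeg l p)
  have hf := aux_fuel l m (plen (shf p (firstSeg l p))) (shf p (firstSeg l p)) (hp.shf _)
    (by omega) le_rfl
  have : removeLEdge l (shf p (firstSeg l p)) = removeLEdgeAux l m (shf p (firstSeg l p)) := by
    rw [removeLEdge, hf]
  rw [this]
  conv_lhs => unfold removeLEdge
  rw [hm, removeLEdgeAux, if_neg h, if_neg (by omega)]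
  rfl

theorem rem_tail {l : ℕ} {p : ℕ → ℕ} (hp : IsPartition p) (h : p 0 ≠ 0)
    (he : l < p 0 + plen p - 1) :
    removeLEdge l (shf p (firstSeg l p)) = shf (removeLEdge l p) (firstSeg l p) := by
  funext j
  rw [shf_apply, rem_big hp h he, if_neg (by omega), if_neg (by omega), Nat.add_sub_cancel]

theorem rem_end {l : ℕ} {p : ℕ → ℕ} (hp : IsPartition p) (h : p 0 ≠ 0)
    (he : l < p 0 + plen p - 1) :
    removeLEdge l p (firstSeg l p - 1) + l + 1 = p 0 + firstSeg l p := by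
  obtain ⟨h1, h2, h3, h4, h5⟩ := seg_basic hp he
  rw [rem_big hp h he, if_neg (by omega), if_pos (by omega)]
  omega

theorem rem_facts (l : ℕ) (hl : 1 ≤ l) : ∀ n p, IsPartition p → plen p ≤ n → ∀ j,
    removeLEdge l p j ≤ p j - 1 ∧ p (j + 1) ≤ removeLEdge l p j + 1 ∧
    (removeLEdge l p j + 1 = p (j + 1) ∨ removeLEdge l p j = 0 ∨
      ∃ s ≤ j, removeLEdge l p j + l + s = p s + j) := by
  intro n
  induction n with
  | zero =>
    intro p hp hn j
    have h0 : p 0 = 0 := by have := mt (plen_pos hp).2; simp at this; omega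
    have := hp.1 0 (j + 1) (Nat.zero_le _)
    rw [rem_zero h0]
    refine ⟨by simp, by omega, by simp⟩
  | succ n ih =>
    intro p hp hn j
    by_cases h0 : p 0 = 0
    · have := hp.1 0 (j + 1) (Nat.zero_le _)
      rw [rem_zero h0]
      refine ⟨by simp, by omega, by simp⟩
    have hj := hp.1 j (j + 1) (Nat.le_succ _)
    by_cases he : p 0 + plen p - 1 ≤ l
    · rw [rem_small hp h0 he]
      refine ⟨by omega, by omega, by omega⟩
    push Not at he
    obtain ⟨h1, h2, h3, h4, h5⟩ := seg_basic hp he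
    rcases lt_trichotomy (j + 1) (firstSeg l p) with hc | hc | hc
    · rw [rem_big hp h0 he, if_pos hc]
      have := (lt_plen hp (j+1)).1 (by omega)
      refine ⟨by omega, by omega, by omega⟩
    · have := rem_end hp h0 he
      rw [← hc, Nat.add_sub_cancel] at this
      refine ⟨?_, by rw [hc] at *; omega, Or.inr (Or.inr ⟨0, by omega, by omega⟩)⟩
      rcases Nat.eq_zero_or_pos j with hj0 | hj0
      · subst hj0; omega
      · have := h3 j hj0 (by omega); omega
    · obtain ⟨k, rfl⟩ : ∃ k, j = k + firstSeg l p := ⟨j - firstSeg l p, by omega⟩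
      have hs := plen_shf hp (firstSeg l p)
      have := ih (shf p (firstSeg l p)) (hp.shf _) (by omega) k
      rw [rem_tail hp h0 he] at this
      simp only [shf_apply] at this
      obtain ⟨a, b, c⟩ := this
      rw [show k + 1 + firstSeg l p = k + firstSeg l p + 1 by ring] at b c
      refine ⟨a, b, ?_⟩
      rcases c with c | c | ⟨s, c1, c2⟩
      · exact Or.inl c
      · exact Or.inr (Or.inl c)
      · exact Or.inr (Or.inr ⟨s + firstSeg l p, by omega, by omega⟩)

theorem rem_partition {l : ℕ} (hl : 1 ≤ l) {p : ℕ → ℕ} (hp : IsPartition p) :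
    IsPartition (removeLEdge l p) := by
  have F := rem_facts l hl _ p hp le_rfl
  refine ⟨fun i j hij => ?_, ?_⟩
  · have : Antitone (removeLEdge l p) := by
      apply antitone_nat_of_succ_le
      intro n
      have a := (F (n+1)).1
      have b := (F n).2.1
      omega
    exact this hij
  · obtain ⟨_, N, hN⟩ := hp
    exact ⟨N, fun i hi => by have := (F i).1; have := hN i hi; omega⟩

theorem rem_regular {l : ℕ} (hl : 2 ≤ l) {p : ℕ → ℕ} (hp : IsPartition p)
    (hr : IsLRegular l p) : IsLRegular l (removeLEdge l p) := by
  have F := rem_facts l (by omega) _ p hp le_rfl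
  have hν := rem_partition (l := l) (by omega) hp
  intro i hi heq
  set v := removeLEdge l p i with hv
  have hval : ∀ j, i ≤ j → j ≤ i + l - 1 → removeLEdge l p j = v := by
    intro j h1 h2
    have a := hν.1 _ _ h1
    have b := hν.1 _ _ h2
    omega
  have hpv : ∀ j, i + 1 ≤ j → j ≤ i + l - 1 → p j = v + 1 := by
    intro j h1 h2
    have a := (F j).1
    have b := (F (j-1)).2.1
    rw [hval j (by omega) h2] at a
    rw [hval (j-1) (by omega) (by omega), Nat.sub_add_cancel (by omega)] at b
    omega
  have hlast := hpv (i+l-1) (by omega) le_rfl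
  have hpi : v + 2 ≤ p i := by
    have a := hr i
    have b := hp.1 i (i+l-1) (by omega)
    rw [hlast] at a b
    by_contra hc
    exact a (by omega) (by omega)
  have hpl : p (i + l) ≠ v + 1 := by
    have a := hr (i+1)
    rw [show i + 1 + l - 1 = i + l by omega, hpv (i+1) le_rfl (by omega)] at a
    exact a (by omega)
  obtain ⟨_, _, c⟩ := F (i+l-1)
  rw [hval (i+l-1) (by omega) le_rfl, show i + l - 1 + 1 = i + l by omega] at c
  rcases c with c | c | ⟨s, c1, c2⟩
  · omega
  · omega
  · by_cases hs : i + 1 ≤ s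
    · have := hpv s hs c1; omega
    · have := hp.1 s i (by omega); omega

theorem pdeg_eq {p : ℕ → ℕ} (hp : IsPartition p) (N : ℕ) (h : plen p ≤ N) :
    pdeg p = ∑ i ∈ Finset.range N, p i := by
  unfold pdeg
  apply Finset.sum_subset
  · intro x; simp; omega
  · intro x _ hx
    by_contra hc
    exact hx (Finset.mem_range.2 ((lt_plen hp x).2 hc))

theorem pdeg_rem {l : ℕ} (hl : 1 ≤ l) {p : ℕ → ℕ} (hp : IsPartition p) :
    pdeg (removeLEdge l p) + elen l p = pdeg p := by
  have hν := rem_partition (l := l) hl hp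
  have F := rem_facts l hl _ p hp le_rfl
  have h1 : plen (removeLEdge l p) ≤ plen p := by
    by_contra hc
    have a := (lt_plen hν (plen p)).1 (by omega)
    have b := mt (lt_plen hp (plen p)).2 (lt_irrefl _)
    have := (F (plen p)).1
    omega
  have : pdeg (removeLEdge l p) ≤ pdeg p := by
    rw [pdeg_eq hν _ h1, pdeg]
    exact Finset.sum_le_sum fun i _ => by have := (F i).1; omega
  unfold elen; omega

theorem plen_rem_le {l : ℕ} (hl : 1 ≤ l) {p : ℕ → ℕ} (hp : IsPartition p) :
    plen (removeLEdge l p) ≤ plen p := by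
  have hν := rem_partition (l := l) hl hp
  have F := rem_facts l hl _ p hp le_rfl
  by_contra hc
  have a := (lt_plen hν (plen p)).1 (by omega)
  have b := mt (lt_plen hp (plen p)).2 (lt_irrefl _)
  have := (F (plen p)).1
  omega

theorem elen_zero {l : ℕ} {p : ℕ → ℕ} (hp : IsPartition p) (h : p 0 = 0) : elen l p = 0 := by
  have : plen p = 0 := by have := mt (plen_pos hp).1; simp at this; exact this h
  unfold elen
  simp [pdeg, this]

theorem elen_small {l : ℕ} (hl : 1 ≤ l) {p : ℕ → ℕ} (hp : IsPartition p) (h : p 0 ≠ 0)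
    (he : p 0 + plen p - 1 ≤ l) : elen l p = p 0 + plen p - 1 := by
  have hν := rem_partition (l := l) hl hp
  have a := pdeg_rem hl hp
  have hpos := (plen_pos hp).2 h
  obtain ⟨m, hm⟩ : ∃ k, plen p = k + 1 := ⟨plen p - 1, by omega⟩
  have hle : plen (removeLEdge l p) ≤ m := by
    by_contra hc
    have a := (lt_plen hν m).1 (by omega)
    rw [rem_small hp h he] at a
    have := (lt_plen hp (m+1)).2 (by omega)
    omega
  rw [pdeg_eq hν m hle, pdeg_eq hp (m+1) (by omega), Finset.sum_range_succ'] at a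
  have : ∑ i ∈ Finset.range m, removeLEdge l p i + m = ∑ i ∈ Finset.range m, p (i+1) := by
    have : ∑ i ∈ Finset.range m, (removeLEdge l p i + 1) = ∑ i ∈ Finset.range m, p (i+1) := by
      apply Finset.sum_congr rfl
      intro i hi
      have := (lt_plen hp (i+1)).1 (by simp at hi; omega)
      rw [rem_small hp h he]; omega
    rw [← this, Finset.sum_add_distrib]; simp
  omega

theorem elen_big {l : ℕ} (hl : 1 ≤ l) {p : ℕ → ℕ} (hp : IsPartition p) (h : p 0 ≠ 0)
    (he : l < p 0 + plen p - 1) : elen l p = l + elen l (shf p (firstSeg l p)) := by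
  have hν := rem_partition (l := l) hl hp
  have a := pdeg_rem hl hp
  have b := pdeg_rem hl (hp.shf (firstSeg l p))
  have hend := rem_end hp h he
  obtain ⟨h1, h2, h3, h4, h5⟩ := seg_basic hp he
  rw [rem_tail hp h he] at b
  have hle := plen_rem_le hl hp
  obtain ⟨n, hn⟩ : ∃ n, plen p = firstSeg l p + n := ⟨plen p - firstSeg l p, by omega⟩
  rw [pdeg_eq (hν.shf _) n (by rw [plen_shf hν]; omega),
    pdeg_eq (hp.shf _) n (by rw [plen_shf hp]; omega)] at b
  rw [pdeg_eq hν _ hle, pdeg, hn, Finset.sum_range_add, Finset.sum_range_add] at a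
  obtain ⟨k, hk⟩ : ∃ k, firstSeg l p = k + 1 := ⟨firstSeg l p - 1, by omega⟩
  simp only [shf_apply] at b
  simp only [add_comm (firstSeg l p)] at a
  have key : ∑ i ∈ Finset.range (firstSeg l p), removeLEdge l p i + l
      = ∑ i ∈ Finset.range (firstSeg l p), p i := by
    have : ∑ i ∈ Finset.range k, removeLEdge l p i + k = ∑ i ∈ Finset.range k, p (i+1) := by
      have : ∑ i ∈ Finset.range k, (removeLEdge l p i + 1) = ∑ i ∈ Finset.range k, p (i+1) := by
        apply Finset.sum_congr rfl
        intro i hi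
        simp at hi
        have := (lt_plen hp (i+1)).1 (by omega)
        rw [rem_big hp h he, if_pos (by omega)]; omega
      rw [← this, Finset.sum_add_distrib]; simp
    rw [hk] at hend ⊢
    rw [Nat.add_sub_cancel] at hend
    rw [Finset.sum_range_succ, Finset.sum_range_succ']
    omega
  omega


/-- `e_l(p)` plus `1` if `l` does not divide it. -/
def sg (l : ℕ) (p : ℕ → ℕ) : ℕ := elen l p + if l ∣ elen l p then 0 else 1

theorem sg_zero {l : ℕ} {p : ℕ → ℕ} (hp : IsPartition p) (h : p 0 = 0) : sg l p = 0 := by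
  simp [sg, elen_zero hp h]

theorem sg_lt {l : ℕ} {p : ℕ → ℕ} (hp : IsPartition p) (h : p 0 ≠ 0)
    (he : p 0 + plen p - 1 < l) : sg l p = p 0 + plen p := by
  have hpos := (plen_pos hp).2 h
  rw [sg, elen_small (by omega) hp h (by omega), if_neg]
  · omega
  · intro hd
    have := Nat.le_of_dvd (by omega) hd
    omega

theorem sg_ge {l : ℕ} (hl : 1 ≤ l) {p : ℕ → ℕ} (hp : IsPartition p) (h : p 0 ≠ 0)
    (he : l ≤ p 0 + plen p - 1) : sg l p = l + sg l (shf p (firstSeg l p)) := by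
  rcases Nat.lt_or_ge l (p 0 + plen p - 1) with hc | hc
  · have := elen_big hl hp h hc
    unfold sg
    rw [this]
    have : l ∣ l + elen l (shf p (firstSeg l p)) ↔ l ∣ elen l (shf p (firstSeg l p)) :=
      Nat.dvd_add_right (dvd_refl l)
    simp only [this]
    omega
  · have e : p 0 + plen p - 1 = l := by omega
    have hpos := (plen_pos hp).2 h
    have h1 := firstSeg_spec l p
    have : p (firstSeg l p) = 0 := by
      by_contra h0
      have := (lt_plen hp _).2 h0
      have := hp.1 0 (firstSeg l p) (Nat.zero_le _)
      omega
    rw [sg_zero (hp.shf _) (by rw [shf_apply, Nat.zero_add, this]), sg,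
      elen_small hl hp h (by omega), e]
    simp

theorem sg_le {l : ℕ} (hl : 1 ≤ l) : ∀ n p, IsPartition p → plen p ≤ n →
    sg l p ≤ p 0 + plen p := by
  intro n
  induction n with
  | zero =>
    intro p hp hn
    have h0 : p 0 = 0 := by have := mt (plen_pos hp).2; simp at this; omega
    rw [sg_zero hp h0]; omega
  | succ n ih =>
    intro p hp hn
    by_cases h0 : p 0 = 0
    · rw [sg_zero hp h0]; omega
    rcases Nat.lt_or_ge (p 0 + plen p - 1) l with hc | hc
    · rw [sg_lt hp h0 hc]
    · rw [sg_ge hl hp h0 hc]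
      have h1 := firstSeg_spec l p
      have hs := plen_shf hp (firstSeg l p)
      have hm := hp.1 0 (firstSeg l p) (Nat.zero_le _)
      have := ih _ (hp.shf (firstSeg l p)) (by omega)
      simp only [shf_apply, Nat.zero_add] at this
      by_cases h2 : p (firstSeg l p) = 0
      · rw [sg_zero (hp.shf _) (by rw [shf_apply, Nat.zero_add, h2])]; omega
      · have := (lt_plen hp _).2 h2
        omega

theorem plen_le_elen {l : ℕ} (hl : 1 ≤ l) : ∀ n p, IsPartition p → plen p ≤ n →
    plen p ≤ elen l p := by
  intro n
  induction n with
  | zero => intro p hp hn; omega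
  | succ n ih =>
    intro p hp hn
    by_cases h0 : p 0 = 0
    · have := mt (plen_pos hp).1; simp at this; have := this h0; omega
    rcases Nat.lt_or_ge l (p 0 + plen p - 1) with hc | hc
    · rw [elen_big hl hp h0 hc]
      obtain ⟨h1, h2, h3, h4, h5⟩ := seg_basic hp hc
      have hs := plen_shf hp (firstSeg l p)
      have := ih _ (hp.shf (firstSeg l p)) (by omega)
      have : firstSeg l p ≤ l := by
        by_contra hc
        have := h3 l hl (by omega)
        have := hp.1 0 l (Nat.zero_le _)
        omega
      omega
    · rw [elen_small hl hp h0 hc]; omega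

theorem mullLen_eq {l : ℕ} (hl : 1 ≤ l) {p : ℕ → ℕ} (hp : IsPartition p) :
    mullLen l p + plen p = sg l p := by
  have := plen_le_elen hl _ p hp le_rfl
  unfold mullLen sg
  split_ifs <;> omega

theorem keyA {l : ℕ} (hl : 1 ≤ l) : ∀ n P, IsPartition P → P 0 ≠ 0 → plen P ≤ n → ∀ u z,
    u ≤ plen (removeLEdge l P) → plen P = plen (removeLEdge l P) + z → z ≤ l →
    P 0 + u ≤ removeLEdge l P u + l →
    z + sg l (shf (removeLEdge l P) u) ≤ sg l P ∧
    sg l P ≤ sg l (shf (removeLEdge l P) u) + z + l := by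
  intro n
  induction n with
  | zero =>
    intro P hP h0 hn
    have := (plen_pos hP).2 h0
    omega
  | succ n ih =>
    intro P hP h0 hn u z hu hz hzl H
    have F := rem_facts l hl _ P hP le_rfl
    have hν := rem_partition hl hP
    have hsP := plen_shf hP (firstSeg l P)
    have hsQ := plen_shf hν u
    have hend := rem_end (l := l) hP h0
    have htail := rem_tail (l := l) hP h0
    have hseg := seg_basic (l := l) hP
    have hlt : removeLEdge l P u < P 0 := by
      have := hν.1 0 u (Nat.zero_le _); have := (F 0).1; omega
    have hP0 := (plen_pos hP).2 h0
    have hsgle := sg_le hl _ P hP le_rfl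
    set ν := removeLEdge l P with hνdef
    have hpl := lt_plen hν
    have hplP := lt_plen hP
    have hanti := hν.1
    rcases Nat.lt_or_ge u (plen ν) with hu' | hu'
    swap
    · have hν0 : ν u = 0 := by
        by_contra hc; have := (hpl u).2 hc; omega
      rw [sg_zero (hν.shf u) (by rw [shf_apply, Nat.zero_add, hν0])]
      refine ⟨?_, by omega⟩
      rcases Nat.lt_or_ge (P 0 + plen P - 1) l with hc | hc
      · rw [sg_lt hP h0 hc]; omega
      · rw [sg_ge hl hP h0 hc]; omega
    have hν0 := (hpl u).1 hu'
    have hQ0 : shf ν u 0 ≠ 0 := by rwa [shf_apply, Nat.zero_add]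
    have hQ0' : shf ν u 0 = ν u := by rw [shf_apply, Nat.zero_add]
    rcases Nat.lt_or_ge (P 0 + plen P - 1) l with hc | hc
    · rw [sg_lt hP h0 hc, sg_lt (hν.shf u) hQ0 (by omega), hQ0', hsQ]
      omega
    rcases Nat.lt_or_ge (shf ν u 0 + plen (shf ν u) - 1) l with hd | hd
    · rw [sg_lt (hν.shf u) hQ0 hd, hQ0', hsQ]
      refine ⟨?_, by omega⟩
      rw [hQ0', hsQ] at hd
      rw [sg_ge hl hP h0 hc]
      by_cases hbig : ν u + plen P ≤ l + u
      · omega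
      obtain ⟨w, hw⟩ : ∃ w, w + ν u = l + u := ⟨l + u - ν u, by omega⟩
      have hwz : ν w = 0 := by
        by_contra hc; have := (hpl w).2 hc; omega
      have he : l < P 0 + plen P - 1 := by omega
      obtain ⟨h1, h2, h3, h4, h5⟩ := hseg he
      have hen := hend he
      have hwh : firstSeg l P ≤ w := by
        by_contra hcc
        have := hanti w (firstSeg l P - 1) (by omega)
        omega
      have hPh := (hplP (firstSeg l P)).1 (by omega)
      have hPh' : shf P (firstSeg l P) 0 = P (firstSeg l P) := by rw [shf_apply, Nat.zero_add]
      rcases Nat.lt_or_ge (shf P (firstSeg l P) 0 + plen (shf P (firstSeg l P)) - 1) l with hf | hf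
      · rw [sg_lt (hP.shf _) (by omega) hf, hPh', hsP]
        omega
      · rw [sg_ge hl (hP.shf _) (by omega) hf]
        omega
    · rw [sg_ge hl (hν.shf u) hQ0 hd, sg_ge hl hP h0 hc, shf_shf]
      rw [hQ0', hsQ] at hd
      have he : l < P 0 + plen P - 1 := by omega
      obtain ⟨h1, h2, h3, h4, h5⟩ := hseg he
      have hen := hend he
      have hta := htail he
      obtain ⟨g1, g2⟩ := firstSeg_spec l (shf ν u)
      have g3 := firstSeg_min l (shf ν u)
      set h := firstSeg l P with hh
      set g := firstSeg l (shf ν u) with hg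
      simp only [shf_apply, Nat.zero_add] at g2 g3
      rw [add_comm g u] at g2
      have hgle : u + g ≤ plen ν := by
        by_contra hcc
        have := g3 (plen ν - u) (by omega) (by omega)
        rw [Nat.sub_add_cancel hu] at this
        have h9 : ν (plen ν) = 0 := by
          by_contra hc; have := (hpl _).2 hc; omega
        omega
      have hmono := hanti u (u + g) (by omega)
      have huh : h ≤ u + g := by
        by_contra hcc
        have := hanti (u+g) (h - 1) (by omega)
        omega
      by_cases hPh : P h = 0
      · have := mt (hplP h).1 (by omega)
        have hz0 : z = 0 := by omega
        have hνg : ν (u+g) = 0 := by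
          by_contra hc; have := (hpl _).2 hc; omega
        rw [sg_zero (hP.shf h) (by rw [shf_apply, Nat.zero_add, hPh]),
          sg_zero (hν.shf _) (by rw [shf_apply, Nat.zero_add, hνg])]
        omega
      have hPh' : shf P h 0 = P h := by rw [shf_apply, Nat.zero_add]
      have hhlt := (hplP h).2 hPh
      have hIH := ih (shf P h) (hP.shf h) (by omega) (by omega) (u + g - h) z
      rw [hta, shf_shf, plen_shf hν, hPh', shf_apply, Nat.sub_add_cancel huh,
        Nat.add_sub_cancel' huh] at hIH
      have key : P h + (u + g - h) ≤ ν (u + g) + l := by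
        rcases Nat.lt_or_ge l (shf P h 0 + plen (shf P h) - 1) with hf | hf
        · have hen' := rem_end (hP.shf h) (by omega) hf
          obtain ⟨k1, k2, k3, k4, k5⟩ := seg_basic (hP.shf h) hf
          set h' := firstSeg l (shf P h) with hh'
          rw [hta, hPh', shf_apply] at hen'
          have hw : u + g ≤ h' - 1 + h := by
            by_contra hcc
            rcases Nat.lt_or_ge u (h' - 1 + h) with hw | hw
            · have := g3 (h' - 1 + h - u) (by omega) (by omega)
              rw [Nat.sub_add_cancel (by omega)] at this
              omega
            · have a1 := hanti h u (by omega)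
              have a2 := (F h).1
              omega
          have := hanti _ _ hw
          omega
        · have hs := rem_small (hP.shf h) (by omega) hf (plen P - 1 - h)
          rw [hta, shf_apply, shf_apply, Nat.sub_add_cancel (by omega),
            show plen P - 1 - h + 1 + h = plen P by omega] at hs
          have h9 : P (plen P) = 0 := by
            by_contra hc; have := (hplP _).2 hc; omega
          have : ¬ (plen P - 1 < plen ν) := by
            rw [hpl]; omega
          omega
      have := hIH (by omega) (by omega) hzl key
      omega

theorem keyA' {l : ℕ} (hl : 2 ≤ l) {P : ℕ → ℕ} (hP : IsPartition P) (hr : IsLRegular l P) :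
    mullLen l (removeLEdge l P) ≤ mullLen l P ∧
      mullLen l P ≤ mullLen l (removeLEdge l P) + l := by
  have hl1 : 1 ≤ l := by omega
  have hν := rem_partition hl1 hP
  have a := mullLen_eq hl1 hP
  have b := mullLen_eq hl1 hν
  have F := rem_facts l hl1 _ P hP le_rfl
  by_cases h0 : P 0 = 0
  · have e := eq_zero_of hP h0
    have : removeLEdge l P = P := by rw [rem_zero h0]; exact e.symm
    rw [this]; omega
  obtain ⟨z, hz⟩ : ∃ z, plen P = plen (removeLEdge l P) + z :=
    ⟨_, (Nat.add_sub_cancel' (plen_rem_le hl1 hP)).symm⟩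
  have hp1 := lt_plen hP
  have hzl : z ≤ l := by
    by_contra hc
    set r := plen (removeLEdge l P) with hrr
    have h1 : removeLEdge l P r = 0 := by
      by_contra hc; have := (lt_plen hν _).2 hc; omega
    have h2 := (F r).2.1
    have h3 := hP.1 (r+1) (r + 1 + l - 1) (by omega)
    have h4 := (hp1 (r+1+l-1)).1 (by omega)
    have h5 := hr (r+1) (by omega)
    omega
  have hH : P 0 + 0 ≤ removeLEdge l P 0 + l := by
    rcases Nat.lt_or_ge l (P 0 + plen P - 1) with hc | hc
    · have := rem_end hP h0 hc
      have := hν.1 0 (firstSeg l P - 1) (Nat.zero_le _)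
      obtain ⟨h1, h2, h3, h4, h5⟩ := seg_basic hP hc
      omega
    · have := (plen_pos hP).2 h0
      omega
  have := keyA hl1 _ P hP h0 le_rfl 0 z (Nat.zero_le _) hz hzl hH
  have e : shf (removeLEdge l P) 0 = removeLEdge l P := rfl
  rw [e] at this
  omega


/-- one upward step in the construction of a partition with given `l`-edge removal. -/
def addSeg (l : ℕ) (N q : ℕ → ℕ) (k s : ℕ) : ℕ → ℕ := fun i =>
  if i = 0 then N (k - 1) + l + 1 - (k - s)
  else if i < k - s then N (s + i - 1) + 1
  else q (i - (k - s))

theorem build {l : ℕ} (hl : 2 ≤ l) {N : ℕ → ℕ} (hN : IsPartition N) (hr : IsLRegular l N)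
    (r : ℕ) (hrl : r ≤ plen N + l) :
    ∀ k q, k ≤ r → (k = r → 0 < k → N (k - 1) ≠ 0) → IsPartition q → IsLRegular l q →
      removeLEdge l q = shf N k → plen q + k = r →
      (∀ j, 1 ≤ j + k → q j ≤ N (j + k - 1) + 1) →
      ∃ M, IsPartition M ∧ IsLRegular l M ∧ removeLEdge l M = N ∧ plen M = r := by
  have hpl := lt_plen hN
  have hNa := hN.1
  intro k
  induction k using Nat.strong_induction_on with
  | _ k ih =>
  intro q hkr hkz hq hqr hrem hlen hdom
  rcases Nat.eq_zero_or_pos k with hk | hk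
  · subst hk
    exact ⟨q, hq, hqr, hrem, by omega⟩
  have hex : ∃ s, N s + (k - 1) < N (k - 1) + l + s := ⟨k - 1, by omega⟩
  classical
  obtain ⟨s, hs, hmin⟩ : ∃ s, N s + (k - 1) < N (k - 1) + l + s ∧
      ∀ i, i < s → ¬ N i + (k - 1) < N (k - 1) + l + i :=
    ⟨Nat.find hex, Nat.find_spec hex, fun i hi => Nat.find_min hex hi⟩
  have hsk : s < k := by
    by_contra hc
    exact hmin (k - 1) (by omega) (by omega)
  have hNs := hNa s (k-1) (by omega)
  obtain ⟨m, hm⟩ : ∃ m, k = s + m := ⟨k - s, by omega⟩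
  have hm1 : 1 ≤ m := by omega
  set Q := addSeg l N q k s with hQ
  have hQ0 : Q 0 + m = N (k - 1) + l + 1 := by
    simp only [hQ, addSeg, if_true]; omega
  have hQmid : ∀ i, 1 ≤ i → i < m → Q i = N (s + i - 1) + 1 := by
    intro i h1 h2
    simp only [hQ, addSeg]
    rw [if_neg (by omega), if_pos (by omega)]
  have hQtail : ∀ i, Q (i + m) = q i := by
    intro i
    simp only [hQ, addSeg]
    rw [if_neg (by omega), if_neg (by omega)]
    congr 1; omega
  have hQdom : ∀ j, 1 ≤ j → Q j ≤ N (j + s - 1) + 1 := by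
    intro j hj
    rcases Nat.lt_or_ge j m with hjm | hjm
    · rw [hQmid j hj hjm, add_comm s j]
    · obtain ⟨i, rfl⟩ : ∃ i, j = i + m := ⟨j - m, by omega⟩
      rw [hQtail]
      have := hdom i (by omega)
      rw [show i + m + s - 1 = i + k - 1 by omega]
      exact this
  have hq0 := hdom 0 (by omega)
  rw [Nat.zero_add] at hq0
  have hQm0 : Q m = q 0 := by have := hQtail 0; rwa [Nat.zero_add] at this
  have hQp : IsPartition Q := by
    refine ⟨?_, ?_⟩
    · have : Antitone Q := by
        apply antitone_nat_of_succ_le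
        intro n
        rcases Nat.lt_or_ge n m with hn | hn
        · rcases Nat.eq_zero_or_pos n with h0 | h0
          · subst h0
            rcases Nat.lt_or_ge 1 m with h1 | h1
            · rw [hQmid 1 le_rfl h1]
              rw [show s + 1 - 1 = s by omega]
              omega
            · have : m = 1 := by omega
              subst this
              rw [Nat.zero_add, hQm0]
              omega
          · rw [hQmid n h0 hn]
            have := hQdom (n+1) (by omega)
            have h2 := hNa (s + n - 1) (n + 1 + s - 1) (by omega)
            omega
        · obtain ⟨i, rfl⟩ : ∃ i, n = i + m := ⟨n - m, by omega⟩
          rw [show i + m + 1 = i + 1 + m by ring, hQtail, hQtail]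
          exact hq.1 _ _ (by omega)
      exact fun i j hij => this hij
    · obtain ⟨_, K, hK⟩ := hq
      refine ⟨K + m, fun i hi => ?_⟩
      obtain ⟨i, rfl⟩ : ∃ j, i = j + m := ⟨i - m, by omega⟩
      rw [hQtail]; exact hK _ (by omega)
  have hQpos : Q 0 ≠ 0 := by omega
  have hQlen : plen Q = plen q + m := by
    apply plen_eq hQp
    intro i
    rcases Nat.lt_or_ge i m with hn | hn
    · rcases Nat.eq_zero_or_pos i with h0 | h0
      · subst h0; constructor <;> intro _ <;> omega
      · rw [hQmid i h0 hn]; constructor <;> intro _ <;> omega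
    · obtain ⟨j, rfl⟩ : ∃ j, i = j + m := ⟨i - m, by omega⟩
      rw [hQtail, ← lt_plen hq]; omega
  have hfs : firstSeg l Q = m := by
    apply firstSeg_eq _ _ _ hm1
    · rw [hQm0]; omega
    · intro i h1 h2
      rw [hQmid i h1 h2]
      have := hNa (s + i - 1) (k - 1) (by omega)
      omega
  have hbig : l < Q 0 + plen Q - 1 := by
    rcases Nat.eq_zero_or_pos (plen q) with h0 | h0
    · have := hkz (by omega) hk; omega
    · omega
  have htl : shf Q m = q := by funext i; rw [shf_apply, hQtail]
  have hQrem : removeLEdge l Q = shf N s := by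
    funext i
    rw [rem_big hQp hQpos hbig, hfs, htl, hrem]
    simp only [shf_apply]
    split_ifs with h1 h2
    · rw [hQmid _ (by omega) h1, Nat.add_sub_cancel]; congr 1; omega
    · rw [show i + s = k - 1 by omega]; omega
    · congr 1; omega
  have hzero : ∀ i, N i = 0 → r ≤ i + l := by
    intro i hi
    have := mt (hpl i).1 (by omega)
    omega
  have hQreg : IsLRegular l Q := by
    intro i hi heq
    rcases Nat.lt_or_ge i m with hn | hn
    · rcases Nat.eq_zero_or_pos i with h0 | h0
      · subst h0
        rw [Nat.zero_add] at heq
        rcases Nat.lt_or_ge (l - 1) m with h1 | h1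
        · rw [hQmid _ (by omega) h1] at heq
          have h2 := hNa (s + (l-1) - 1) (k-1) (by omega)
          have hml : m = l := by omega
          have h3 := hQp.1 0 1 (by omega)
          rw [hQmid 1 le_rfl (by omega), show s + 1 - 1 = s by omega] at h3
          have h4 := hr s
          rw [show s + l - 1 = k - 1 by omega] at h4
          by_cases h5 : N s = 0
          · have := hzero s h5
            have := hkz (by omega) hk
            omega
          · exact h4 h5 (by omega)
        · obtain ⟨j, hj⟩ : ∃ j, l - 1 = j + m := ⟨l - 1 - m, by omega⟩
          rw [hj, hQtail] at heq
          have := hq.1 0 j (by omega)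
          omega
      · have h1 := hQmid i h0 hn
        have h2 := hQdom (i + l - 1) (by omega)
        rw [heq, h1] at h2
        have h3 := hNa (s + i - 1) (i + l - 1 + s - 1) (by omega)
        have h4 := hr (s + i - 1)
        rw [show s + i - 1 + l - 1 = i + l - 1 + s - 1 by omega] at h4
        by_cases h5 : N (s + i - 1) = 0
        · have h6 := hzero _ h5
          have h7 := (lt_plen hQp (i + l - 1)).2 (by omega)
          omega
        · exact h4 h5 (by omega)
    · obtain ⟨j, rfl⟩ : ∃ j, i = j + m := ⟨i - m, by omega⟩
      have := hqr j
      rw [show j + m + l - 1 = j + l - 1 + m by omega, hQtail, hQtail] at heq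
      rw [hQtail] at hi
      exact this hi heq
  apply ih s hsk Q (by omega) (by omega) hQp hQreg hQrem (by omega)
  intro j hj
  rcases Nat.eq_zero_or_pos j with h0 | h0
  · subst h0
    have := hmin (s - 1) (by omega)
    rw [Nat.zero_add]
    omega
  · exact hQdom j h0

theorem exists_build {l : ℕ} (hl : 2 ≤ l) {N : ℕ → ℕ} (hN : IsPartition N)
    (hr : IsLRegular l N) (r : ℕ) (h1 : plen N ≤ r) (h2 : r ≤ plen N + l) :
    ∃ M, IsPartition M ∧ IsLRegular l M ∧ removeLEdge l M = N ∧ plen M = r := by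
  have hpl := lt_plen hN
  rcases Nat.eq_or_lt_of_le h1 with h | h
  · apply build hl hN hr r h2 r (fun _ => 0) le_rfl
    · intro _ h0
      exact (hpl _).1 (by omega)
    · exact isPartition_zero
    · intro i hi; simp at hi
    · rw [rem_zero rfl]
      funext j
      rw [shf_apply]
      by_contra hc
      have := (hpl (j + r)).2 (fun h => hc h.symm)
      omega
    · rw [plen_zero]; omega
    · intro j _; simp
  · set q : ℕ → ℕ := fun i => if i = 0 then 1 else 0 with hq
    have hqp : IsPartition q := by
      refine ⟨fun i j hij => ?_, 1, fun i hi => ?_⟩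
      · simp only [hq]; split_ifs <;> omega
      · simp only [hq]; rw [if_neg (by omega)]
    have hql : plen q = 1 := by
      apply plen_eq hqp
      intro i
      simp only [hq]; split_ifs <;> simp <;> omega
    have hq0 : q 0 = 1 := by simp [hq]
    have hq1 : ∀ i, 1 ≤ i → q i = 0 := fun i hi => by simp only [hq]; rw [if_neg (by omega)]
    apply build hl hN hr r h2 (r - 1) q (by omega) (by omega) hqp
    · intro i hi
      rw [hq1 (i + l - 1) (by omega)]; exact hi.symm
    · funext j
      rw [rem_small hqp (by omega) (by omega), hq1 (j+1) (by omega), shf_apply]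
      by_contra hc
      have := (hpl (j + (r - 1))).2 (fun h => hc (by omega))
      omega
    · omega
    · intro j _
      rcases Nat.eq_zero_or_pos j with h0 | h0
      · subst h0; omega
      · rw [hq1 j h0]; omega

theorem elen_pos {l : ℕ} (hl : 1 ≤ l) {p : ℕ → ℕ} (hp : IsPartition p) (h : p 0 ≠ 0) :
    0 < elen l p := by
  have := plen_le_elen hl _ p hp le_rfl
  have := (plen_pos hp).2 h
  omega

theorem mullAux_spec {l : ℕ} (hl : 2 ≤ l) : ∀ n p, IsPartition p → IsLRegular l p →
    pdeg p ≤ n → IsPartition (mullAux l n p) ∧ IsLRegular l (mullAux l n p) ∧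
      plen (mullAux l n p) = mullLen l p := by
  have hl1 : 1 ≤ l := by omega
  have hz : ∀ p, IsPartition p → p 0 = 0 → plen (fun _ => 0) = mullLen l p := by
    intro p hp h0
    have := mullLen_eq hl1 hp
    rw [sg_zero hp h0] at this
    rw [plen_zero]; omega
  intro n
  induction n with
  | zero =>
    intro p hp hr hd
    have h0 : p 0 = 0 := by
      by_contra h0
      have := elen_pos hl1 hp h0
      have := pdeg_rem hl1 hp
      omega
    simp only [mullAux]
    exact ⟨isPartition_zero, fun i hi => absurd rfl hi, hz p hp h0⟩
  | succ n ih =>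
    intro p hp hr hd
    by_cases h0 : p 0 = 0
    · simp only [mullAux, if_pos h0]
      exact ⟨isPartition_zero, fun i hi => absurd rfl hi, hz p hp h0⟩
    · have a := elen_pos hl1 hp h0
      have b := pdeg_rem hl1 hp
      obtain ⟨i1, i2, i3⟩ := ih (removeLEdge l p) (rem_partition hl1 hp)
        (rem_regular hl hp hr) (by omega)
      have c := keyA' hl hp hr
      have e := exists_build hl i1 i2 (mullLen l p) (by omega) (by omega)
      have := Classical.epsilon_spec e
      simp only [mullAux, if_neg h0]
      exact ⟨this.1, this.2.1, this.2.2.2⟩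

theorem plen_mull {l : ℕ} (hl : 2 ≤ l) {p : ℕ → ℕ} (hp : IsPartition p)
    (hr : IsLRegular l p) : plen (mull l p) = mullLen l p :=
  (mullAux_spec hl _ p hp hr le_rfl).2.2


theorem removeNode_partition {P : ℕ → ℕ} (hP : IsPartition P) {ρ : ℕ} (h : P (ρ + 1) < P ρ) :
    IsPartition (removeNode P ρ) := by
  obtain ⟨h1, K, hK⟩ := hP
  refine ⟨fun i j hij => ?_, K, fun i hi => ?_⟩
  · have a := h1 i j hij
    simp only [removeNode]
    split_ifs with b c c
    · exact le_rfl
    · subst b; omega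
    · subst c
      have := h1 (i+1) j (by omega)
      omega
    · exact a
  · have := hK i hi
    simp only [removeNode]
    split_ifs with b
    · subst b; omega
    · exact this

theorem removeNode_plen {P : ℕ → ℕ} (hP : IsPartition P) {ρ : ℕ} (h : P (ρ + 1) < P ρ)
    (h0 : P (ρ + 1) ≠ 0) : plen (removeNode P ρ) = plen P := by
  apply plen_eq (removeNode_partition hP h)
  intro i
  rw [lt_plen hP]
  simp only [removeNode]
  split_ifs with b
  · subst b; omega
  · rfl

theorem removeNode_self (P : ℕ → ℕ) (ρ : ℕ) : removeNode P ρ ρ = P ρ - 1 := by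
  simp [removeNode]

theorem removeNode_ne (P : ℕ → ℕ) {ρ k : ℕ} (h : k ≠ ρ) : removeNode P ρ k = P k := by
  simp [removeNode, h]

theorem elen_shf_one {l : ℕ} (hl : 1 ≤ l) {P : ℕ → ℕ} (hP : IsPartition P)
    (h0 : P 0 ≠ 0) (he : l < P 0 + plen P - 1) (hPh : P (firstSeg l P) ≠ 0)
    (h1 : P 1 = P 0) (h2 : 2 ≤ firstSeg l P)
    (hc : l + P (firstSeg l P) < P 0 + firstSeg l P ∨
      (P 0 + firstSeg l P = l + P (firstSeg l P) ∧ P (firstSeg l P + 1) = P (firstSeg l P) ∧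
        elen l (shf (shf P (firstSeg l P)) 1) = elen l (shf P (firstSeg l P)))) :
    elen l (shf P 1) = elen l P := by
  obtain ⟨s1, s2, s3, s4, s5⟩ := seg_basic hP he
  have hlen := (lt_plen hP _).2 hPh
  have hbig := elen_big hl hP h0 he
  have hs := plen_shf hP 1
  have hq0 : shf P 1 0 = P 0 := h1
  set h := firstSeg l P with hh
  have hanti := hP.1
  rcases hc with hc | ⟨c1, c2, c3⟩
  · have hf : firstSeg l (shf P 1) = h - 1 := by
      apply firstSeg_eq
      · omega
      · rw [hq0, shf_apply, Nat.sub_add_cancel (by omega)]; omega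
      · intro i i1 i2
        rw [hq0, shf_apply]
        have := s3 (i+1) (by omega) (by omega)
        have := hanti 0 (i+1) (by omega)
        omega
    rw [elen_big hl (hP.shf 1) (by omega) (by omega), hf, shf_shf,
      show 1 + (h - 1) = h by omega, hbig]
  · have := (lt_plen hP (h+1)).2 (by omega)
    have hf : firstSeg l (shf P 1) = h := by
      apply firstSeg_eq
      · omega
      · rw [hq0, shf_apply]; omega
      · intro i i1 i2
        rw [hq0, shf_apply]
        rcases Nat.lt_or_ge (i+1) h with hi | hi
        · have := s3 (i+1) (by omega) (by omega)
          have := hanti 0 (i+1) (by omega)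
          omega
        · have e1 : P (i+1) = P h := by rw [show i + 1 = h by omega]
          have := hanti 0 h (by omega)
          omega
    rw [elen_big hl (hP.shf 1) (by omega) (by omega), hf, hbig, ← c3, shf_shf, shf_shf,
      add_comm 1 h]

theorem disc {l : ℕ} (hl : 2 ≤ l) : ∀ n P, IsPartition P → IsLRegular l P →
    ¬ edgeConnAux l n P → ∃ ρ m q, 1 ≤ m ∧ m < l ∧ P (m - 1) = P 0 ∧
      P (ρ + 1) < P ρ ∧ P (ρ + 1) ≠ 0 ∧ P (ρ + l - 1) + 1 ≠ P ρ ∧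
      P ρ + (m - 1) + q * l = P 0 + ρ ∧
      (∀ q' ≤ q, ∃ j, P j + (m - 1) + q' * l = P 0 + j) ∧
      elen l (removeNode P ρ) = elen l P ∧
      (2 ≤ m → elen l (shf P 1) = elen l P) := by
  have hl1 : 1 ≤ l := by omega
  intro n
  induction n with
  | zero => intro P _ _ h; exact absurd trivial h
  | succ n ih =>
  intro P hP hr hd
  rw [edgeConnAux] at hd
  have hel : l < elen l P := by
    by_contra hc
    rw [if_pos (by omega)] at hd
    exact hd trivial
  rw [if_neg (by omega)] at hd
  have h0 : P 0 ≠ 0 := by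
    intro h0; rw [elen_zero hP h0] at hel; omega
  have he : l < P 0 + plen P - 1 := by
    by_contra hc
    rw [elen_small hl1 hP h0 (by omega)] at hel; omega
  obtain ⟨s1, s2, s3, s4, s5⟩ := seg_basic hP he
  have hbig := elen_big hl1 hP h0 he
  have hf1 := elen_shf_one hl1 hP h0 he
  change ¬ (_ ∧ edgeConnAux l n (shf P (firstSeg l P))) at hd
  set h := firstSeg l P with hh
  have hanti := hP.1
  have hPh : P h ≠ 0 := by
    intro hc
    rw [elen_zero (hP.shf h) (by rw [shf_apply, Nat.zero_add, hc])] at hbig; omega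
  have hlen := (lt_plen hP _).2 hPh
  -- the initial run
  have hex : ∃ m, P m ≠ P 0 := ⟨plen P, by
    have := mt (lt_plen hP (plen P)).2 (lt_irrefl _)
    simp at this; omega⟩
  obtain ⟨m, hm, hmin⟩ : ∃ m, P m ≠ P 0 ∧ ∀ i, i < m → P i = P 0 := by
    classical
    exact ⟨Nat.find hex, Nat.find_spec hex, fun i hi => by
      have := Nat.find_min hex hi; simpa using this⟩
  have hm1 : 1 ≤ m := by
    by_contra hc; rw [show m = 0 by omega] at hm; exact hm rfl
  have hml : m < l := by
    by_contra hc
    exact hr 0 h0 (by rw [Nat.zero_add]; exact hmin _ (by omega))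
  have hmP : P m < P 0 := by have := hanti 0 m (by omega); omega
  have hmh : m ≤ h := by
    by_contra hc
    have := hmin h (by omega)
    omega
  have hmm := hmin (m-1) (by omega)
  have hPm : P m ≠ 0 := by have := hanti m h hmh; omega
  have hT0 : shf P h 0 = P h := by rw [shf_apply, Nat.zero_add]
  -- choosing the end of the initial run
  have new : (l + P h < P 0 + h ∨ (P 0 + h = l + P h ∧ ∃ M, m < M ∧ P (M - 1 + h) = P h ∧
      (2 ≤ M → elen l (shf (shf P h) 1) = elen l (shf P h)))) →
      ∃ ρ m q, 1 ≤ m ∧ m < l ∧ P (m - 1) = P 0 ∧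
      P (ρ + 1) < P ρ ∧ P (ρ + 1) ≠ 0 ∧ P (ρ + l - 1) + 1 ≠ P ρ ∧
      P ρ + (m - 1) + q * l = P 0 + ρ ∧
      (∀ q' ≤ q, ∃ j, P j + (m - 1) + q' * l = P 0 + j) ∧
      elen l (removeNode P ρ) = elen l P ∧
      (2 ≤ m → elen l (shf P 1) = elen l P) := by
    intro hc
    have hrem1 : P (m - 1 + 1) < P (m - 1) := by
      rw [Nat.sub_add_cancel hm1]; omega
    have hrem0 : P (m - 1 + 1) ≠ 0 := by rwa [Nat.sub_add_cancel hm1]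
    have hRp := removeNode_partition hP hrem1
    have hRl := removeNode_plen hP hrem1 hrem0
    refine ⟨m - 1, m, 0, hm1, hml, hmm, hrem1, hrem0, ?_, ?_, ?_, ?_, ?_⟩
    · intro heq
      rw [hmm] at heq
      have hall : ∀ i, m ≤ i → i ≤ m - 1 + l - 1 → P i + 1 = P 0 := by
        intro i i1 i2
        have a := hanti _ _ i1
        have b := hanti _ _ i2
        omega
      have hhl : h ≤ l - 1 := by
        by_contra hcc
        have a := s3 (l-1) (by omega) (by omega)
        have b := hall (l-1) (by omega) (by omega)
        omega
      have a := hall h hmh (by omega)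
      rcases hc with hc | ⟨c1, M, c2, c3, c4⟩
      · omega
      · have b := hanti (m + h) (M - 1 + h) (by omega)
        have c := hanti h (m + h) (by omega)
        have d := hall m le_rfl (by omega)
        have e := hr m hPm
        rw [show m + l - 1 = m + h by omega] at e
        omega
    · omega
    · intro q' hq'
      exact ⟨m - 1, by rw [show q' = 0 by omega]; omega⟩
    · rw [hbig]
      rcases Nat.lt_or_ge 1 m with hm2 | hm2
      · have hR0 : removeNode P (m - 1) 0 = P 0 := removeNode_ne P (by omega)
        have hRh : removeNode P (m - 1) h = P h := removeNode_ne P (by omega)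
        have hf : firstSeg l (removeNode P (m - 1)) = h := by
          apply firstSeg_eq _ _ _ s1
          · rw [hR0, hRh]; omega
          · intro i i1 i2
            rw [hR0]
            by_cases hi : i = m - 1
            · rw [hi, removeNode_self]; omega
            · rw [removeNode_ne P hi]
              have := s3 i i1 i2
              have := hanti 0 i (by omega)
              omega
        rw [elen_big hl1 hRp (by omega) (by omega), hf]
        congr 2
        funext j
        rw [shf_apply, shf_apply, removeNode_ne P (by omega)]
      · have hm1' : m = 1 := by omega
        subst hm1'
        simp only [Nat.sub_self, Nat.zero_add] at *
        have hR0 : removeNode P 0 0 = P 0 - 1 := removeNode_self P 0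
        rcases hc with hc | ⟨c1, M, c2, c3, c4⟩
        · have hf : firstSeg l (removeNode P 0) = h := by
            apply firstSeg_eq _ _ _ s1
            · rw [hR0, removeNode_ne P (by omega)]; omega
            · intro i i1 i2
              rw [hR0, removeNode_ne P (by omega)]
              have := s3 i i1 i2
              have := hanti 1 i (by omega)
              omega
          rw [elen_big hl1 hRp (by omega) (by omega), hf]
          congr 2
          funext j
          rw [shf_apply, shf_apply, removeNode_ne P (by omega)]
        · have b := hanti (h + 1) (M - 1 + h) (by omega)
          have c := hanti h (h + 1) (by omega)
          have hlen2 := (lt_plen hP (h+1)).2 (by omega)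
          have hf : firstSeg l (removeNode P 0) = h + 1 := by
            apply firstSeg_eq _ _ _ (by omega)
            · rw [hR0, removeNode_ne P (by omega)]; omega
            · intro i i1 i2
              rw [hR0, removeNode_ne P (by omega)]
              have := hanti 1 i (by omega)
              by_cases hi : i = h
              · have e1 : P i = P h := by rw [hi]
                omega
              · have := s3 i i1 (by omega)
                omega
          rw [elen_big hl1 hRp (by omega) (by omega), hf, ← c4 (by omega), shf_shf]
          congr 2
    · intro hm2
      apply hf1 hPh (hmin 1 (by omega)) (by omega)
      rcases hc with hc | ⟨c1, M, c2, c3, c4⟩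
      · exact Or.inl hc
      · have b := hanti (h + 1) (M - 1 + h) (by omega)
        have c := hanti h (h + 1) (by omega)
        exact Or.inr ⟨c1, by omega, c4 (by omega)⟩
  by_cases hconn : P 0 + h = l + P h
  swap
  · exact new (Or.inl (by omega))
  have hTr : IsLRegular l (shf P h) := by
    intro i hi
    have := hr (i + h) hi
    rw [show i + h + l - 1 = i + l - 1 + h by omega] at this
    exact this
  obtain ⟨ρ, M, q, a1, a2, a3, a4, a5, a6, a7, a8, a9, a10⟩ :=
    ih (shf P h) (hP.shf h) hTr (fun hc => hd ⟨hconn, hc⟩)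
  simp only [shf_apply, Nat.zero_add] at a3 a4 a5 a6 a7 a8
  rcases Nat.lt_or_ge m M with hmM | hmM
  · exact new (Or.inr ⟨hconn, M, hmM, a3, a10⟩)
  have hrem1 : P (ρ + h + 1) < P (ρ + h) := by rwa [show ρ + h + 1 = ρ + 1 + h by ring]
  have hrem0 : P (ρ + h + 1) ≠ 0 := by rwa [show ρ + h + 1 = ρ + 1 + h by ring]
  have hRp := removeNode_partition hP hrem1
  have hRl := removeNode_plen hP hrem1 hrem0
  refine ⟨ρ + h, M, q + 1, a1, a2, hmin _ (by omega), hrem1, hrem0, ?_, ?_, ?_, ?_, ?_⟩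
  · rwa [show ρ + h + l - 1 = ρ + l - 1 + h by omega]
  · rw [Nat.succ_mul]; omega
  · intro q' hq'
    rcases Nat.eq_zero_or_pos q' with hz | hz
    · exact ⟨M - 1, by rw [hmin (M-1) (by omega), hz]; omega⟩
    · obtain ⟨t, rfl⟩ : ∃ t, q' = t + 1 := ⟨q' - 1, by omega⟩
      obtain ⟨j, hj⟩ := a8 t (by omega)
      exact ⟨j + h, by rw [Nat.succ_mul]; omega⟩
  · rw [hbig, ← a9]
    have hR0 : removeNode P (ρ + h) 0 = P 0 := removeNode_ne P (by omega)
    have hRh : removeNode P (ρ + h) h ≤ P h := by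
      simp only [removeNode]; split_ifs with hx
      · rw [← hx]; omega
      · exact le_rfl
    have hf : firstSeg l (removeNode P (ρ + h)) = h := by
      apply firstSeg_eq _ _ _ s1
      · rw [hR0]; omega
      · intro i i1 i2
        rw [hR0, removeNode_ne P (by omega)]
        have := s3 i i1 i2
        have := hanti 0 i (by omega)
        omega
    rw [elen_big hl1 hRp (by omega) (by omega), hf]
    congr 2
    funext j
    simp only [shf_apply, removeNode, Nat.add_right_cancel_iff]
  · intro hM2
    apply hf1 hPh (hmin 1 (by omega)) (by omega)
    have b := hanti (h + 1) (M - 1 + h) (by omega)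
    have c := hanti h (h + 1) (by omega)
    exact Or.inr ⟨hconn, by omega, a10 hM2⟩

theorem lt_conjP {p : ℕ → ℕ} (hp : IsPartition p) (i j : ℕ) : i < conjP p j ↔ j < p i := by
  have hset : ∀ j, ((Finset.range (plen p)).filter fun i => j < p i)
      = Finset.range (conjP p j) := by
    intro j
    have hlow : ∀ a b, a ≤ b → b ∈ ((Finset.range (plen p)).filter fun i => j < p i) →
        a ∈ ((Finset.range (plen p)).filter fun i => j < p i) := by
      intro a b hab hb
      simp only [Finset.mem_filter, Finset.mem_range] at hb ⊢
      have := hp.1 a b hab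
      omega
    have hsub : ((Finset.range (plen p)).filter fun i => j < p i) ⊆
        Finset.range (conjP p j) := by
      intro x hx
      have : Finset.range (x+1) ⊆ ((Finset.range (plen p)).filter fun i => j < p i) := by
        intro y hy
        simp only [Finset.mem_range] at hy
        exact hlow y x (by omega) hx
      have := Finset.card_le_card this
      rw [Finset.card_range] at this
      simp only [Finset.mem_range, conjP]
      omega
    apply Finset.eq_of_subset_of_card_le hsub
    rw [Finset.card_range, conjP]
  have := Finset.ext_iff.1 (hset j) i
  simp only [Finset.mem_filter, Finset.mem_range] at this
  rw [← this]
  constructor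
  · exact fun h => h.2
  · exact fun h => ⟨(lt_plen hp i).2 (by omega), h⟩

theorem conjP_partition {p : ℕ → ℕ} (hp : IsPartition p) : IsPartition (conjP p) := by
  refine ⟨fun i j hij => ?_, p 0, fun i hi => ?_⟩
  · by_contra hc
    have a := (lt_conjP hp (conjP p i) j).1 (by omega)
    have b := (lt_conjP hp (conjP p i) i).2 (by omega)
    omega
  · by_contra hc
    have := (lt_conjP hp 0 i).1 (by omega)
    omega

theorem conjP_conjP {p : ℕ → ℕ} (hp : IsPartition p) : conjP (conjP p) = p := by
  funext i
  have h : ∀ j, j < conjP (conjP p) i ↔ j < p i := fun j =>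
    (lt_conjP (conjP_partition hp) j i).trans (lt_conjP hp i j)
  have a := h (p i)
  have b := h (conjP (conjP p) i)
  omega

theorem conjP_regular {l : ℕ} {p : ℕ → ℕ} (hl : 2 ≤ l) (hp : IsPartition p)
    (hres : IsLRestricted l p) : IsLRegular l (conjP p) := by
  intro s hs heq
  have a := (lt_conjP hp (conjP p s - 1) (s + l - 1)).1 (by omega)
  have b := mt (lt_conjP hp (conjP p s) s).2 (lt_irrefl _)
  have c := hres (conjP p s - 1)
  rw [Nat.sub_add_cancel (by omega)] at c
  omega

theorem main_aux (l : ℕ) (hl : 2 ≤ l) (p0 pb : ℕ → ℕ)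
    (hp0 : IsPartition p0) (hres : IsLRestricted l p0)
    (hpb : IsPartition pb)
    (hlen : plen pb ≤ plen p0)
    (hdisc : ¬ EdgeLConnected l (conjP p0)) :
    ∃ i : ℕ,
      Suitable l (fun k => p0 k + l * pb k) i ∧
      Suitable l p0 i ∧
      IsLRestricted l (removeNode p0 i) ∧
      CoSuitable l (conjP p0) (p0 i - 1) ∧
      IsLRegular l (removeNode (conjP p0) (p0 i - 1)) ∧
      plen (mull l (conjP p0)) = plen (mull l (removeNode (conjP p0) (p0 i - 1))) := by
  have hl1 : 1 ≤ l := by omega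
  have gal := lt_conjP hp0
  have hμ := conjP_partition hp0
  have hμr := conjP_regular hl hp0 hres
  have hcc := conjP_conjP hp0
  obtain ⟨ρ, m, q, a1, a2, a3, a4, a5, a6, a7, a8, a9, -⟩ := disc hl _ _ hμ hμr hdisc
  set μ := conjP p0 with hμdef
  obtain ⟨i, hi⟩ : ∃ i, μ ρ = i + 1 := ⟨μ ρ - 1, by omega⟩
  have hpi : p0 i = ρ + 1 := by
    have b1 := (gal i ρ).1 (by omega)
    have b2 := mt (gal i (ρ + 1)).2 (by omega)
    omega
  have hpi1 : p0 (i + 1) ≤ ρ := by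
    have := mt (gal (i+1) ρ).2 (by omega)
    omega
  have hμ0 : ∀ j, p0 j ≠ 0 ↔ j < μ 0 := fun j => by rw [gal]; omega
  -- suitability for every admissible multiple
  have suit : ∀ pb : ℕ → ℕ, IsPartition pb → plen pb ≤ plen p0 →
      Suitable l (fun k => p0 k + l * pb k) i := by
    intro pb hpb hlen
    refine ⟨?_, ?_⟩
    · have := Nat.mul_le_mul_left l (hpb.1 i (i+1) (by omega))
      simp only [Removable]
      omega
    · rintro j hij ⟨hj, -⟩ hmod
      have hjl : j ≤ μ 0 := by
        by_contra hc
        have h1 : p0 (μ 0) = 0 := by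
          by_contra hc; have := (hμ0 _).1 hc; omega
        have h2 : pb (μ 0) = 0 := by
          by_contra hc
          have h3 := (lt_plen hpb _).2 hc
          have := (lt_plen hp0 (μ 0)).1 (by omega)
          omega
        have : plen (fun k => p0 k + l * pb k) ≤ μ 0 := by
          apply Nat.sInf_le
          show p0 (μ 0) + l * pb (μ 0) = 0
          rw [h1, h2]; simp
        omega
      have hpj : p0 j ≤ ρ := le_trans (hp0.1 (i+1) j (by omega)) hpi1
      -- extract the multiple of `l`
      have hd : (l : ℤ) ∣ ((μ 0 : ℤ) - (m - 1)) - ((j : ℤ) - p0 j + 1) := by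
        have h1 := hmod.dvd
        push_cast at h1
        have h2 : ((μ 0 : ℤ) - (m - 1)) - ((j : ℤ) - p0 j + 1) =
            - (((p0 i : ℤ) + l * pb i - i - 1) - (p0 j + l * pb j - j))
            + l * (pb i - pb j) + q * l + 2 * (((p0 j : ℤ) - j) - (p0 j - j)) + 0 := by
          have h3 : (μ ρ : ℤ) + (m - 1) + q * l = μ 0 + ρ := by
            have := a7
            zify [a1] at this
            exact this
          rw [hi] at h3
          rw [hpi]
          push_cast at h3 ⊢
          linarith
        rw [h2]
        have e1 : (l : ℤ) ∣ l * (pb i - pb j) := Dvd.intro _ rfl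
        have e2 : (l : ℤ) ∣ q * l := Dvd.intro_left _ rfl
        have e3 : (l : ℤ) ∣ 2 * (((p0 j : ℤ) - j) - (p0 j - j)) := by
          rw [sub_self, mul_zero]; exact dvd_zero _
        exact dvd_add (dvd_add (dvd_add (dvd_add (dvd_neg.2 h1) e1) e2) e3) (dvd_zero _)
      obtain ⟨t, ht⟩ := hd
      have hlz : (0 : ℤ) < l := by omega
      have ht0 : 0 ≤ t := by
        by_contra hc
        have : (l : ℤ) * t ≤ l * (-1) := mul_le_mul_of_nonneg_left (by omega) (by omega)
        omega
      obtain ⟨t, rfl⟩ := Int.eq_ofNat_of_zero_le ht0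
      have htq : t ≤ q := by
        by_contra hc
        have : q * l ≤ t * l := Nat.mul_le_mul_right l (by omega)
        have h5 : (l : ℤ) * t = ((t * l : ℕ) : ℤ) := by push_cast; ring
        rw [h5] at ht
        omega
      obtain ⟨s, hs⟩ := a8 t htq
      have h5 : (l : ℤ) * t = ((t * l : ℕ) : ℤ) := by push_cast; ring
      rw [h5] at ht
      have hg := gal j s
      by_cases hsj : s < p0 j
      · have := hg.2 hsj; omega
      · have := mt hg.1 hsj; omega
  have suit0 : Suitable l p0 i := by
    have := suit (fun _ => 0) isPartition_zero (by rw [plen_zero]; omega)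
    simpa using this
  have hreg : IsLRegular l (removeNode μ ρ) := by
    intro k hk heq
    by_cases h1 : k = ρ
    · subst h1
      rw [removeNode_self, removeNode_ne μ (by omega)] at heq
      omega
    · rw [removeNode_ne μ h1] at hk heq
      by_cases h2 : k + l - 1 = ρ
      · rw [h2, removeNode_self] at heq
        have := hμ.1 k ρ (by omega)
        omega
      · rw [removeNode_ne μ h2] at heq
        exact hμr k hk heq
  refine ⟨i, suit pb hpb hlen, suit0, ?_, ?_, ?_, ?_⟩
  · intro k
    have hk := hres k
    simp only [removeNode]
    by_cases h1 : k = i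
    · subst h1
      rw [if_pos rfl, if_neg (by omega)]; omega
    · rw [if_neg h1]
      by_cases h2 : k + 1 = i
      · rw [if_pos h2, hpi]
        by_contra hc
        have b := (gal k (ρ + l - 1)).2 (by omega)
        have c := hμ.1 (ρ+1) (ρ + l - 1) (by omega)
        omega
      · rw [if_neg h2]; exact hk
  · rw [hpi, Nat.add_sub_cancel]
    refine ⟨a4, ?_⟩
    rw [hcc, hi, Nat.add_sub_cancel]
    exact suit0
  · rw [hpi, Nat.add_sub_cancel]; exact hreg
  · rw [hpi, Nat.add_sub_cancel, plen_mull hl hμ hμr,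
      plen_mull hl (removeNode_partition hμ a4) hreg]
    unfold mullLen
    rw [a9, removeNode_plen hμ a4 a5]


/-- Let `λ = λ⁰ + lλ̄` be a non-`l`-restricted partition (`λ̄ ≠ 0`) with `λ⁰`
`l`-restricted, `λ̄` a partition, and `ℓ(λ̄) ≤ ℓ(λ⁰)`; set `μ = (λ⁰)'` and assume `μ` is
edge `l`-disconnected. Then there is a row `i` such that: `S = (i, λ_i)` is a suitable
node of `λ`, `S₀ = (i, λ⁰_i)` is a suitable node of `λ⁰`, `(λ⁰)_{S₀}` is `l`-restricted,
and `R = (λ⁰_i, i)` is a co-suitable node of `μ` with `μ_R` `l`-regular and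
`ℓ(Mull(μ)) = ℓ(Mull(μ_R))`. -/
theorem exists_suitable_of_conj_disconnected (l : ℕ) (hl : 2 ≤ l) (p0 pb : ℕ → ℕ)
    (hp0 : IsPartition p0) (hres : IsLRestricted l p0)
    (hpb : IsPartition pb) (hpbne : pb 0 ≠ 0)
    (hlen : plen pb ≤ plen p0)
    (hdisc : ¬ EdgeLConnected l (conjP p0)) :
    ∃ i : ℕ,
      Suitable l (fun k => p0 k + l * pb k) i ∧
      Suitable l p0 i ∧
      IsLRestricted l (removeNode p0 i) ∧
      CoSuitable l (conjP p0) (p0 i - 1) ∧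
      IsLRegular l (removeNode (conjP p0) (p0 i - 1)) ∧
      plen (mull l (conjP p0)) = plen (mull l (removeNode (conjP p0) (p0 i - 1))) := by
  exact main_aux l hl p0 pb hp0 hres hpb hlen hdisc
end
end

section
/- Let m be a positive integer and let λ be a partition, written as λ = λ^0 + lλ̄ with λ^0 l-restricted and λ̄ a partition. Suppose that ℓ(Mull((λ^0)')) ≤ m and that λ_1 ≤ m(l−1). Then λ can be written in the form λ = λ(1) + … + λ(s), where each λ(i) is an m_i-distinguished partition (not necessarily l-restricted) for some integer 0 < m_i < l, and m = m_1 + … + m_s. (The hypothesis ℓ(Mull((λ^0)')) ≤ m is the paper's condition that the restricted partition λ^0 is m-special.) -/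
noncomputable section

namespace MullDist

/-! ### Scan description of the `l`-edge -/

def bb (p : ℕ → ℕ) (i : ℕ) : ℤ := (p i : ℤ) - (i : ℤ)

def WW (l : ℕ) (p : ℕ → ℕ) : ℕ → ℤ
  | 0 => bb p 0
  | i + 1 => if bb p (i + 1) ≤ WW l p i - l then bb p (i + 1) else WW l p i

def JJ (l : ℕ) (p : ℕ → ℕ) : ℕ → ℤ
  | 0 => 0
  | i + 1 => if bb p (i + 1) ≤ WW l p i - l then JJ l p i + 1 else JJ l p i

def GG (l : ℕ) (p : ℕ → ℕ) (i : ℕ) : ℤ := JJ l p i * l + WW l p i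

def QQ (l : ℕ) (p : ℕ → ℕ) (i : ℕ) : ℕ := max (p (i + 1) - 1) ((WW l p i - l + i).toNat)

lemma anti_step {p : ℕ → ℕ} (hp : IsPartition p) (i : ℕ) : p (i + 1) ≤ p i :=
  hp.1 _ _ (Nat.le_succ i)

lemma isPartition_of_step {p : ℕ → ℕ} (h : ∀ i, p (i + 1) ≤ p i) {N : ℕ}
    (hN : ∀ i, N ≤ i → p i = 0) : IsPartition p :=
  ⟨fun _ _ hij => antitone_nat_of_succ_le h hij, N, hN⟩

lemma plen_zero {p : ℕ → ℕ} (hp : IsPartition p) {i : ℕ} (hi : plen p ≤ i) : p i = 0 := by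
  obtain ⟨N, hN⟩ := hp.2
  have h1 : p (plen p) = 0 := Nat.sInf_mem (s := {N | p N = 0}) ⟨N, hN N le_rfl⟩
  have := hp.1 _ _ hi
  omega

lemma plen_pos {p : ℕ → ℕ} {i : ℕ} (hi : i < plen p) : 0 < p i := by
  have := Nat.notMem_of_lt_sInf hi
  simp only [Set.mem_ofPred_eq] at this
  omega

lemma plen_le {p : ℕ → ℕ} {i : ℕ} (hi : p i = 0) : plen p ≤ i := Nat.sInf_le hi

lemma plen_eq {p : ℕ → ℕ} {n : ℕ} (h0 : p n = 0) (h1 : ∀ i, i < n → p i ≠ 0) :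
    plen p = n := by
  apply le_antisymm (plen_le h0)
  by_contra h
  push Not at h
  have hp : p (plen p) = 0 := Nat.sInf_mem (s := {N | p N = 0}) ⟨n, h0⟩
  exact h1 _ h hp

lemma bb_step {p : ℕ → ℕ} (hp : IsPartition p) (i : ℕ) : bb p (i + 1) < bb p i := by
  have := anti_step hp i
  unfold bb
  push_cast
  omega

lemma bb_anti {p : ℕ → ℕ} (hp : IsPartition p) {i j : ℕ} (h : i ≤ j) :
    bb p j + (j - i) ≤ bb p i := by
  have := hp.1 _ _ h
  unfold bb
  omega

lemma WW_bounds {l : ℕ} (hl : 2 ≤ l) {p : ℕ → ℕ} (hp : IsPartition p) (i : ℕ) :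
    bb p i ≤ WW l p i ∧ WW l p i - l < bb p i := by
  induction i with
  | zero => simp only [WW]; omega
  | succ i ih =>
    have := bb_step hp i
    simp only [WW]
    split_ifs <;> omega

lemma WW_step {l : ℕ} (hl : 2 ≤ l) {p : ℕ → ℕ} (hp : IsPartition p) (i : ℕ) :
    WW l p (i + 1) ≤ WW l p i := by
  simp only [WW]
  split_ifs <;> omega

lemma WW_anti {l : ℕ} (hl : 2 ≤ l) {p : ℕ → ℕ} (hp : IsPartition p) {i j : ℕ} (h : i ≤ j) :
    WW l p j ≤ WW l p i := antitone_nat_of_succ_le (WW_step hl hp) h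

/-- `QQ` as a maximum of integers -/
lemma QQ_eq (l : ℕ) (p : ℕ → ℕ) (i : ℕ) :
    bb (QQ l p) i = max (max (bb p (i + 1)) (WW l p i - l)) (-(i : ℤ)) := by
  unfold bb QQ
  push_cast
  omega

lemma GG_const {l : ℕ} (hl : 2 ≤ l) {p : ℕ → ℕ} (hp : IsPartition p) {i : ℕ}
    (hi : plen p ≤ i) : GG l p i = GG l p (plen p) := by
  induction i, hi using Nat.le_induction with
  | base => rfl
  | succ i hi ih =>
    rw [← ih]
    have h1 := plen_zero hp hi
    have h2 := plen_zero hp (le_trans hi (Nat.le_succ i))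
    have h3 := WW_bounds hl hp i
    unfold GG
    simp only [WW, JJ]
    split_ifs with h
    · have : WW l p i - l = bb p (i + 1) := by
        unfold bb at *
        push_cast at *
        omega
      linarith
    · rfl

lemma GG_const' {l : ℕ} (hl : 2 ≤ l) {p : ℕ → ℕ} (hp : IsPartition p) {i j : ℕ}
    (hi : plen p ≤ i) (hj : plen p ≤ j) : GG l p i = GG l p j := by
  rw [GG_const hl hp hi, GG_const hl hp hj]

/-- the value `s` -/
def ss (l : ℕ) (p : ℕ → ℕ) : ℤ := GG l p (plen p)

/-! ### `QQ` is a regular partition -/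

lemma QQ_lt {l : ℕ} (hl : 2 ≤ l) {p : ℕ → ℕ} (hp : IsPartition p) {i : ℕ} (hi : i < plen p) :
    QQ l p i < p i := by
  have h1 := QQ_eq l p i
  have h2 := bb_step hp i
  have h3 := WW_bounds hl hp i
  have h4 := plen_pos hi
  unfold bb at *
  omega

lemma QQ_zero {l : ℕ} (hl : 2 ≤ l) {p : ℕ → ℕ} (hp : IsPartition p) {i : ℕ} (hi : plen p ≤ i) :
    QQ l p i = 0 := by
  have h1 := QQ_eq l p i
  have h2 := bb_step hp i
  have h3 := WW_bounds hl hp i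
  have h4 := plen_zero hp hi
  unfold bb at *
  omega

lemma QQ_part {l : ℕ} (hl : 2 ≤ l) {p : ℕ → ℕ} (hp : IsPartition p) : IsPartition (QQ l p) := by
  refine isPartition_of_step (N := plen p) (fun i => ?_) (fun i hi => QQ_zero hl hp hi)
  have h1 := QQ_eq l p i
  have h1' := QQ_eq l p (i + 1)
  have h2 := bb_step hp (i + 1)
  have h3 : WW l p (i + 1) = if bb p (i + 1) ≤ WW l p i - l then bb p (i + 1) else WW l p i := rfl
  split_ifs at h3
  · unfold bb at *
    push_cast at *
    omega
  · unfold bb at *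
    push_cast at *
    omega

lemma plen_QQ_le {l : ℕ} (hl : 2 ≤ l) {p : ℕ → ℕ} (hp : IsPartition p) :
    plen (QQ l p) ≤ plen p := plen_le (QQ_zero hl hp le_rfl)

lemma reg_bb {l : ℕ} (hl : 2 ≤ l) {p : ℕ → ℕ} (hp : IsPartition p) (hr : IsLRegular l p)
    {i : ℕ} (hi : p i ≠ 0) : bb p (i + l - 1) + l ≤ bb p i := by
  have h1 := hr i hi
  have h2 := hp.1 i (i + l - 1) (by omega)
  unfold bb
  omega

lemma QQ_reg {l : ℕ} (hl : 2 ≤ l) {p : ℕ → ℕ} (hp : IsPartition p) (hr : IsLRegular l p) :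
    IsLRegular l (QQ l p) := by
  intro i hi heq
  have hip : i < plen p := by
    by_contra h
    exact hi (QQ_zero hl hp (by omega))
  have hpi := plen_pos hip
  by_cases hlast : i + 1 < plen p
  · have hpi1 := plen_pos hlast
    have r1 := reg_bb hl hp hr hpi.ne'
    have r2 := reg_bb hl hp hr hpi1.ne'
    obtain ⟨j, hj⟩ : ∃ j, i + l - 1 = j := ⟨_, rfl⟩
    have hj' : i + 1 + l - 1 = j + 1 := by omega
    rw [hj] at r1 heq
    rw [hj'] at r2
    have q1 := QQ_eq l p i
    have q2 := QQ_eq l p j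
    have w1 := WW_bounds hl hp i
    have w2 := WW_bounds hl hp j
    have key : ∀ k, i ≤ k → WW l p k = WW l p i ∨ WW l p k ≤ bb p (i + 1) := by
      intro k hk
      induction k, hk using Nat.le_induction with
      | base => left; rfl
      | succ k hk ih =>
        simp only [WW]
        have := bb_anti hp (show i + 1 ≤ k + 1 by omega)
        split_ifs
        · right; omega
        · exact ih
    have := key j (by omega)
    unfold bb at *
    omega
  · apply hi
    rw [← heq]
    exact QQ_zero hl hp (by omega)

/-! ### Lemma A -/

lemma WW_succ (l : ℕ) (p : ℕ → ℕ) (i : ℕ) :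
    (bb p (i + 1) ≤ WW l p i - l ∧ WW l p (i + 1) = bb p (i + 1) ∧
      JJ l p (i + 1) = JJ l p i + 1) ∨
    (WW l p i - l < bb p (i + 1) ∧ WW l p (i + 1) = WW l p i ∧ JJ l p (i + 1) = JJ l p i) := by
  simp only [WW, JJ]
  split_ifs with h
  · left; exact ⟨h, rfl, rfl⟩
  · right; exact ⟨by omega, rfl, rfl⟩

/-- interlacing invariant, comparing `p` and `QQ l p` at row `i` -/
lemma interlace {l : ℕ} (hl : 2 ≤ l) {p : ℕ → ℕ} (hp : IsPartition p) (i : ℕ)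
    (hi : i + 1 < plen p) :
    (JJ l (QQ l p) i = JJ l p i ∧ WW l p i - l ≤ WW l (QQ l p) i ∧
      WW l (QQ l p) i < WW l p i) ∨
    (JJ l (QQ l p) i = JJ l p i - 1 ∧ WW l p i ≤ WW l (QQ l p) i ∧
      WW l p i - l < bb p (i + 1)) := by
  induction i with
  | zero =>
    left
    have h1 := QQ_eq l p 0
    have h2 := bb_step hp 0
    have h3 := plen_pos hi
    simp only [WW, JJ] at *
    refine ⟨trivial, ?_, ?_⟩
    · omega
    · unfold bb at *
      push_cast at *
      omega
  | succ i ih =>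
    have ih := ih (by omega)
    have h1 := QQ_eq l p (i + 1)
    have h2 := bb_step hp (i + 1)
    have h3 := plen_pos hi
    have h4 := WW_bounds hl hp (i + 1)
    have h5 : -((i + 1 : ℕ) : ℤ) ≤ bb p (i + 1 + 1) := by
      unfold bb
      push_cast
      omega
    have e1 := WW_succ l p i
    have e2 := WW_succ l (QQ l p) i
    generalize JJ l (QQ l p) (i + 1) = a1 at *
    generalize JJ l (QQ l p) i = a2 at *
    generalize JJ l p (i + 1) = a3 at *
    generalize JJ l p i = a4 at *
    generalize WW l (QQ l p) (i + 1) = a5 at *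
    generalize WW l (QQ l p) i = a6 at *
    generalize WW l p (i + 1) = a7 at *
    generalize WW l p i = a8 at *
    omega

lemma ss_compare {l : ℕ} (hl : 2 ≤ l) {p : ℕ → ℕ} (hp : IsPartition p) :
    ss l (QQ l p) ≤ ss l p ∧ ss l p ≤ ss l (QQ l p) + l := by
  have hq := QQ_part hl hp
  have hle := plen_QQ_le hl hp
  obtain ⟨r, hr⟩ : ∃ r, plen p = r := ⟨_, rfl⟩
  rcases r with _ | r
  · have e1 : ss l p = 0 := by
      have := plen_zero hp hr.le
      simp [ss, hr, GG, JJ, WW, bb, this]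
    have e2 : ss l (QQ l p) = 0 := by
      have hh : plen (QQ l p) = 0 := by omega
      have := plen_zero hq hh.le
      simp [ss, hh, GG, JJ, WW, bb, this]
    omega
  · have e2 : ss l (QQ l p) = GG l (QQ l p) (r + 1) := by
      rw [ss]; exact GG_const' hl hq le_rfl (by omega)
    have e1 : ss l p = GG l p (r + 1) := by rw [ss, hr]
    have hb : bb p (r + 1) = -(r + 1 : ℤ) := by
      have := plen_zero hp hr.le
      unfold bb; rw [this]; push_cast; omega
    have hbq : bb (QQ l p) (r + 1) = -(r + 1 : ℤ) := by
      have := QQ_zero hl hp hr.le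
      unfold bb; rw [this]; push_cast; omega
    have hbr : -(r : ℤ) + 1 ≤ bb p r := by
      have := plen_pos (show r < plen p by omega)
      unfold bb; omega
    have w1 := WW_bounds hl hp r
    have s1 := WW_succ l p r
    have s2 := WW_succ l (QQ l p) r
    have h1 := QQ_eq l p r
    rw [hb] at s1 h1
    rw [hbq] at s2
    rw [e1, e2]
    have main : ∃ w j w' j' : ℤ, GG l p (r + 1) = j * l + w ∧
        GG l (QQ l p) (r + 1) = j' * l + w' ∧
        ((j' = j ∧ w' ≤ w ∧ w ≤ w' + l) ∨ (j' = j - 1 ∧ w' ≤ w + l ∧ w ≤ w') ∨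
         (j' = j + 1 ∧ w' + l ≤ w ∧ w ≤ w' + 2 * l)) := by
      refine ⟨WW l p (r + 1), JJ l p (r + 1), WW l (QQ l p) (r + 1), JJ l (QQ l p) (r + 1),
        rfl, rfl, ?_⟩
      rcases r with _ | r
      · have z1 : WW l p 0 = bb p 0 := rfl
        have z2 : WW l (QQ l p) 0 = bb (QQ l p) 0 := rfl
        have z3 : JJ l p 0 = 0 := rfl
        have z4 : JJ l (QQ l p) 0 = 0 := rfl
        push_cast at *
        omega
      · have il := interlace hl hp r (by omega)
        have t1 := WW_succ l p r
        have t2 := WW_succ l (QQ l p) r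
        have w0 := WW_bounds hl hp r
        have hb0 := bb_step hp r
        generalize bb (QQ l p) (r + 1) = c0 at *
        generalize bb p (r + 1) = b0 at *
        generalize JJ l (QQ l p) (r + 1 + 1) = a1 at *
        generalize JJ l (QQ l p) (r + 1) = a2 at *
        generalize JJ l (QQ l p) r = a3 at *
        generalize JJ l p (r + 1 + 1) = a4 at *
        generalize JJ l p (r + 1) = a5 at *
        generalize JJ l p r = a6 at *
        generalize WW l (QQ l p) (r + 1 + 1) = a7 at *
        generalize WW l (QQ l p) (r + 1) = a8 at *
        generalize WW l (QQ l p) r = a9 at *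
        generalize WW l p (r + 1 + 1) = a10 at *
        generalize WW l p (r + 1) = a11 at *
        generalize WW l p r = a12 at *
        push_cast at *
        omega
    obtain ⟨w, j, w', j', g1, g2, h⟩ := main
    rw [g1, g2]
    rcases h with ⟨rfl, h, h'⟩ | ⟨rfl, h, h'⟩ | ⟨rfl, h, h'⟩
    · constructor <;> linarith
    · constructor <;> linarith
    · constructor <;> linarith

/-! ### Lemma B: adding an `l`-edge -/

def VV (l n : ℕ) (c : ℕ → ℤ) : ℕ → ℤ
  | 0 => c (n - 1) + l
  | k + 1 => if VV l n c k ≤ c (n - 2 - k) then c (n - 2 - k) + l else VV l n c k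

lemma exists_v (l n : ℕ) (c : ℕ → ℤ) : ∃ v : ℕ → ℤ, v (n - 1) = c (n - 1) + l ∧
    ∀ i, i + 1 < n → v i = if v (i + 1) ≤ c i then c i + l else v (i + 1) := by
  refine ⟨fun i => VV l n c (n - 1 - i), ?_, ?_⟩
  · simp [VV]
  · intro i hi
    have e1 : n - 1 - i = (n - 1 - (i + 1)) + 1 := by omega
    have e2 : n - 2 - (n - 1 - (i + 1)) = i := by omega
    simp only [e1]
    rw [VV, e2]

lemma add_edge {l : ℕ} (hl : 2 ≤ l) {q : ℕ → ℕ} (hq : IsPartition q) (hr : IsLRegular l q)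
    (n d : ℕ) (hd : d ≤ 1) (hn : plen q ≤ n) (hn2 : n + d ≤ plen q + l)
    (hnd : n = plen q ∨ d = 1) :
    ∃ p, IsPartition p ∧ IsLRegular l p ∧ QQ l p = q ∧ plen p = n + d := by
  obtain ⟨v, hv0, hv⟩ := exists_v l n (bb q)
  have hvinv : ∀ k i, i + k + 1 = n → ∃ j, i ≤ j ∧ j < n ∧ v i = bb q j + l ∧
      bb q i < v i := by
    intro k
    induction k with
    | zero =>
      intro i hi
      have : n - 1 = i := by omega
      rw [this] at hv0
      exact ⟨i, le_rfl, by omega, hv0, by omega⟩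
    | succ k ih =>
      intro i hi
      obtain ⟨j, h1, h2, h3, h4⟩ := ih (i + 1) (by omega)
      have := hv i (by omega)
      split_ifs at this with hh
      · exact ⟨i, le_rfl, by omega, this, by omega⟩
      · exact ⟨j, by omega, h2, by omega, by omega⟩
  have hvinv : ∀ i, i < n → ∃ j, i ≤ j ∧ j < n ∧ v i = bb q j + l ∧ bb q i < v i :=
    fun i hi => hvinv (n - 1 - i) i (by omega)
  have hqb : ∀ i : ℕ, -(i : ℤ) ≤ bb q i := fun i => by unfold bb; omega
  let B : ℕ → ℤ := fun i =>
    if i < n then (if i = 0 then v 0 else min (v i) (bb q (i - 1)))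
    else if i = n then -(n : ℤ) + d else -(i : ℤ)
  have B0 : 0 < n → B 0 = v 0 := fun h => by simp [B, h]
  have B1 : ∀ i, i + 1 < n → B (i + 1) = min (v (i + 1)) (bb q i) := fun i h => by simp [B, h]
  have Bn : B n = -(n : ℤ) + d := by simp [B]
  have Bgt : ∀ i, n < i → B i = -(i : ℤ) := fun i h => by
    simp [B, show ¬ i < n by omega, show i ≠ n by omega]
  have Bpos : ∀ i, i < n → -(i : ℤ) < B i := by
    intro i hi
    obtain ⟨j, h1, h2, h3, h4⟩ := hvinv i hi
    have := hqb i
    rcases i with _ | i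
    · rw [B0 hi]; omega
    · rw [B1 i hi]
      have := hqb i
      push_cast at *
      omega
  have Bnn : ∀ i : ℕ, -(i : ℤ) ≤ B i := by
    intro i
    rcases lt_trichotomy i n with h | h | h
    · exact (Bpos i h).le
    · rw [h, Bn]; omega
    · rw [Bgt i h]
  have Bv : ∀ i, i < n → B i ≤ v i := by
    intro i hi
    rcases i with _ | i
    · rw [B0 hi]
    · rw [B1 i hi]; omega
  have Bc : ∀ i, i < n → B (i + 1) ≤ bb q i := by
    intro i hi
    by_cases h : i + 1 < n
    · rw [B1 i h]; omega
    · have : i + 1 = n := by omega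
      rw [this, Bn]
      have := hqb i
      push_cast at *
      omega
  have Bc' : ∀ i, i < n → bb q i < B i := by
    intro i hi
    obtain ⟨j, h1, h2, h3, h4⟩ := hvinv i hi
    rcases i with _ | i
    · rw [B0 hi]; exact h4
    · rw [B1 i hi]
      have := bb_step hq i
      omega
  have Bstep : ∀ i, B (i + 1) < B i := by
    intro i
    rcases lt_trichotomy i n with h | h | h
    · have := Bc i h
      have := Bc' i h
      omega
    · rw [Bgt (i + 1) (by omega), h, Bn]; push_cast; omega
    · rw [Bgt (i + 1) (by omega), Bgt i h]; push_cast; omega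
  let p : ℕ → ℕ := fun i => (B i + i).toNat
  have hpB : ∀ i, bb p i = B i := by
    intro i
    have := Bnn i
    simp only [bb, p]
    omega
  have hp : IsPartition p := by
    refine isPartition_of_step (N := n + 1) (fun i => ?_) (fun i hi => ?_)
    · have h1 := hpB i
      have h2 := hpB (i + 1)
      have := Bstep i
      unfold bb at h1 h2
      push_cast at *
      omega
    · have h1 := hpB i
      rw [Bgt i (by omega)] at h1
      unfold bb at h1
      omega
  have hplen : plen p = n + d := by
    apply plen_eq
    · have h1 := hpB (n + d)
      have : B (n + d) = -((n + d : ℕ) : ℤ) := by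
        rcases Nat.eq_zero_or_pos d with h | h
        · subst h
          simpa using Bn
        · exact Bgt _ (by omega)
      rw [this] at h1
      unfold bb at h1
      omega
    · intro i hi
      have h1 := hpB i
      by_cases h : i < n
      · have := Bpos i h
        unfold bb at h1
        omega
      · have : i = n := by omega
        subst this
        rw [Bn] at h1
        unfold bb at h1
        omega
  have hW : ∀ i, i < n → WW l p i = v i := by
    intro i
    induction i with
    | zero => intro h; simp only [WW]; rw [hpB, B0 h]
    | succ i ih =>
      intro h
      have e := ih (by omega)
      have hvi := hv i h
      have b1 := B1 i h
      obtain ⟨j, h1, h2, h3, h4⟩ := hvinv (i + 1) h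
      simp only [WW]
      rw [hpB, e]
      split_ifs at hvi with hh
      · rw [if_pos (by omega)]; omega
      · have := bb_anti hq (show i ≤ j by omega)
        rw [if_neg (by omega)]; omega
  refine ⟨p, hp, ?_, ?_, hplen⟩
  · intro i hi heq
    have hin : i < n + d := by
      by_contra h
      exact hi (plen_zero hp (by omega))
    have hj : i + l - 1 < n + d := by
      by_contra h
      have := plen_zero hp (i := i + l - 1) (by omega)
      omega
    obtain ⟨k, hk⟩ : ∃ k, i + l - 1 = k + 1 := ⟨i + l - 2, by omega⟩
    rw [hk] at heq hj
    have hi' : i < n := by omega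
    have hkn : k < n := by omega
    have b1 := Bc k hkn
    have e1 := hpB i
    have e2 := hpB (k + 1)
    have hBB : B i < B (k + 1) + l := by
      unfold bb at e1 e2
      push_cast at *
      omega
    obtain ⟨j, h1, h2, h3, h4⟩ := hvinv i hi'
    -- the part coming from the transferred entries
    have c1 : ∀ i', i = i' + 1 → bb q k + l ≤ bb q i' := by
      intro i' hi2
      have hq0 := plen_pos (show i' < plen q by omega)
      have := reg_bb hl hq hr hq0.ne'
      rwa [show i' + l - 1 = k by omega] at this
    have c2 : bb q k + l ≤ v i := by
      by_cases hjk : j ≤ k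
      · have := bb_anti hq hjk
        omega
      · exfalso
        have hq0 := plen_pos (show i < plen q by omega)
        have := reg_bb hl hq hr hq0.ne'
        rw [hk] at this
        have := bb_anti hq (show k + 1 ≤ j by omega)
        omega
    rcases i with _ | i
    · rw [B0 hi'] at hBB
      omega
    · rw [B1 i hi'] at hBB
      have := c1 i rfl
      omega
  · have key : ∀ i, bb (QQ l p) i = bb q i := by
      intro i
      by_cases hin : n + d ≤ i
      · have h1 := QQ_zero hl hp (i := i) (by omega)
        have h2 := plen_zero hq (i := i) (by omega)
        unfold bb
        rw [h1, h2]
      · rw [QQ_eq, hpB]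
        have hb := hqb i
        by_cases h : i < n
        · rw [hW i h]
          have b1 := Bc i h
          by_cases h' : i + 1 < n
          · have b2 := B1 i h'
            have hvi := hv i h'
            obtain ⟨j, h1, h2, h3, h4⟩ := hvinv (i + 1) h'
            split_ifs at hvi with hh
            · omega
            · have := bb_anti hq (show i ≤ j by omega)
              omega
          · have : n - 1 = i := by omega
            rw [this] at hv0
            omega
        · have hi : i = n := by omega
          subst hi
          have w1 := WW_bounds hl hp i
          have hWn : WW l p i = B i := by
            rcases i with _ | i
            · simp only [WW]; exact hpB 0
            · simp only [WW]
              rw [hpB, hW i (by omega), if_pos]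
              simp only [Nat.add_sub_cancel] at hv0
              have := Bc i (by omega)
              omega
          rw [hWn, Bn, Bgt _ (Nat.lt_succ_self i)]
          have := plen_zero hq hn
          unfold bb
          push_cast
          omega
    funext i
    have := key i
    unfold bb at this
    omega

lemma exists_add {l : ℕ} (hl : 2 ≤ l) {q : ℕ → ℕ} (hq : IsPartition q) (hr : IsLRegular l q)
    (r : ℕ) (h1 : plen q ≤ r) (h2 : r ≤ plen q + l) :
    ∃ p, IsPartition p ∧ IsLRegular l p ∧ QQ l p = q ∧ plen p = r := by
  by_cases h : r = plen q
  · obtain ⟨p, a, b, c, e⟩ := add_edge hl hq hr (plen q) 0 (by omega) le_rfl (by omega) (.inl rfl)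
    exact ⟨p, a, b, c, by omega⟩
  · obtain ⟨p, a, b, c, e⟩ := add_edge hl hq hr (r - 1) 1 (by omega) (by omega) (by omega) (.inr rfl)
    exact ⟨p, a, b, c, by omega⟩

/-! ### First segment and shifts -/

lemma exists_seg (l : ℕ) {p : ℕ → ℕ} (hp : IsPartition p) :
    ∃ h, 1 ≤ h ∧ bb p h ≤ bb p 0 - l ∧ ∀ i, 1 ≤ i → i < h → bb p 0 - l < bb p i := by
  have hex : ∃ h, 1 ≤ h ∧ bb p h ≤ bb p 0 - l := by
    refine ⟨l + 1, by omega, ?_⟩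
    have := bb_anti hp (Nat.zero_le (l + 1))
    push_cast at this
    omega
  classical
  refine ⟨Nat.find hex, (Nat.find_spec hex).1, (Nat.find_spec hex).2, fun i h1 h2 => ?_⟩
  have := Nat.find_min hex h2
  by_contra h
  exact this ⟨h1, by omega⟩

lemma firstSeg_eq {l : ℕ} {p : ℕ → ℕ} (hp : IsPartition p) {h : ℕ} (h1 : 1 ≤ h)
    (h2 : bb p h ≤ bb p 0 - l) (h3 : ∀ i, 1 ≤ i → i < h → bb p 0 - l < bb p i) :
    firstSeg l p = h := by
  have hmem : h ∈ {h | 1 ≤ h ∧ l ≤ p 0 - p h + h} := by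
    refine ⟨h1, ?_⟩
    have := hp.1 0 h (Nat.zero_le _)
    unfold bb at h2
    omega
  apply le_antisymm (Nat.sInf_le hmem)
  by_contra hlt
  push Not at hlt
  have hm := Nat.sInf_mem (s := {h | 1 ≤ h ∧ l ≤ p 0 - p h + h}) ⟨h, hmem⟩
  change 1 ≤ firstSeg l p ∧ l ≤ p 0 - p (firstSeg l p) + firstSeg l p at hm
  have := h3 _ hm.1 hlt
  have := hp.1 0 (firstSeg l p) (Nat.zero_le _)
  unfold bb at *
  omega

def sh (h : ℕ) (p : ℕ → ℕ) : ℕ → ℕ := fun j => p (j + h)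

lemma sh_part {p : ℕ → ℕ} (hp : IsPartition p) (h : ℕ) : IsPartition (sh h p) := by
  obtain ⟨h1, N, hN⟩ := hp
  exact ⟨fun i j hij => h1 _ _ (by omega), N, fun i hi => hN _ (by omega)⟩

lemma bb_sh (p : ℕ → ℕ) (h i : ℕ) : bb (sh h p) i = bb p (i + h) + h := by
  simp only [bb, sh]; push_cast; ring

lemma seg_const {l : ℕ} {p : ℕ → ℕ} {h : ℕ}
    (h3 : ∀ i, 1 ≤ i → i < h → bb p 0 - l < bb p i) (i : ℕ) (hi : i < h) :
    WW l p i = bb p 0 ∧ JJ l p i = 0 := by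
  induction i with
  | zero => simp [WW, JJ]
  | succ i ih =>
    obtain ⟨a, b⟩ := ih (by omega)
    have := h3 (i + 1) (by omega) hi
    simp only [WW, JJ, a, b]
    rw [if_neg (by omega), if_neg (by omega)]
    simp

lemma seg_shift {l : ℕ} {p : ℕ → ℕ} {h : ℕ} (h1 : 1 ≤ h)
    (h2 : bb p h ≤ bb p 0 - l)
    (h3 : ∀ i, 1 ≤ i → i < h → bb p 0 - l < bb p i) (i : ℕ) :
    WW l p (i + h) = WW l (sh h p) i - h ∧ JJ l p (i + h) = JJ l (sh h p) i + 1 := by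
  induction i with
  | zero =>
    obtain ⟨k, rfl⟩ : ∃ k, h = k + 1 := ⟨h - 1, by omega⟩
    obtain ⟨a, b⟩ := seg_const h3 k (by omega)
    rw [Nat.zero_add]
    have e := bb_sh p (k + 1) 0
    rw [Nat.zero_add] at e
    simp only [WW, JJ, a, b]
    rw [if_pos h2, if_pos h2, e]
    constructor <;> ring
  | succ i ih =>
    obtain ⟨a, b⟩ := ih
    have e := bb_sh p h (i + 1)
    rw [show i + 1 + h = i + h + 1 by omega] at *
    simp only [WW, JJ, a, b]
    rw [e]
    by_cases hc : bb p (i + h + 1) ≤ WW l (sh h p) i - h - l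
    · rw [if_pos hc, if_pos hc, if_pos (by omega), if_pos (by omega)]
      constructor <;> ring
    · rw [if_neg hc, if_neg hc, if_neg (by omega), if_neg (by omega)]
      constructor <;> ring

/-! ### `removeLEdge` equals `QQ` -/

lemma removeAux_eq {l : ℕ} (hl : 2 ≤ l) (n : ℕ) : ∀ p : ℕ → ℕ, IsPartition p → plen p ≤ n →
    removeLEdgeAux l n p = QQ l p := by
  induction n with
  | zero =>
    intro p hp hn
    funext i
    simp only [removeLEdgeAux]
    exact (QQ_zero hl hp (by omega)).symm
  | succ n ih =>
    intro p hp hn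
    funext i
    simp only [removeLEdgeAux]
    split_ifs with c1 c2
    all_goals beta_reduce
    · have := plen_le c1
      exact (QQ_zero hl hp (by omega)).symm
    · by_cases hi : plen p ≤ i
      · rw [QQ_zero hl hp hi]
        have := plen_zero hp (i := i + 1) (by omega)
        omega
      · have w := WW_anti hl hp (Nat.zero_le i)
        have w0 : WW l p 0 = p 0 := by simp [WW, bb]
        unfold QQ
        omega
    · obtain ⟨h, h1, h2, h3⟩ := exists_seg l hp
      have hf := firstSeg_eq hp h1 h2 h3
      rw [hf]
      have hb0 : bb p 0 = p 0 := by simp [bb]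
      rw [hb0] at h2
      have hanti := hp.1 0 h (Nat.zero_le _)
      split_ifs with d1 d2
      · obtain ⟨a, b⟩ := seg_const h3 i (by omega)
        have := h3 (i + 1) (by omega) d1
        rw [QQ, a]
        unfold bb at *
        push_cast at *
        omega
      · obtain ⟨a, b⟩ := seg_const h3 i (by omega)
        subst d2
        rw [QQ, a]
        unfold bb at *
        push_cast at *
        omega
      · have hsh : (fun j => p (j + h)) = sh h p := rfl
        rw [hsh, ih _ (sh_part hp h)]
        · have s := (seg_shift h1 (hb0 ▸ h2) h3 (i - h)).1
          rw [show i - h + h = i by omega] at s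
          unfold QQ
          rw [s]
          have : sh h p (i - h + 1) = p (i + 1) := by
            simp only [sh]; congr 1; omega
          rw [this]
          omega
        · apply plen_le
          exact plen_zero hp (by omega)

lemma remove_eq {l : ℕ} (hl : 2 ≤ l) {p : ℕ → ℕ} (hp : IsPartition p) :
    removeLEdge l p = QQ l p := removeAux_eq hl _ p hp le_rfl

/-! ### `mullLen` equals `ss` -/

lemma pdeg_eq {p : ℕ → ℕ} (hp : IsPartition p) {N : ℕ} (hN : plen p ≤ N) :
    pdeg p = ∑ i ∈ Finset.range N, p i := by
  unfold pdeg
  apply Finset.sum_subset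
  · intro i hi
    simp only [Finset.mem_range] at *
    omega
  · intro i _ h2
    simp only [Finset.mem_range] at *
    exact plen_zero hp (by omega)

lemma sum_diff {l : ℕ} (hl : 2 ≤ l) {p : ℕ → ℕ} (hp : IsPartition p) (k : ℕ)
    (hk : k < plen p) :
    ∑ i ∈ Finset.range k, ((p i : ℤ) - QQ l p i) = GG l p k - bb p k := by
  induction k with
  | zero => simp [GG, JJ, WW]
  | succ k ih =>
    rw [Finset.sum_range_succ, ih (by omega)]
    have hq := QQ_eq l p k
    have hpos := plen_pos hk
    have e : (p k : ℤ) - QQ l p k = bb p k - bb (QQ l p) k := by unfold bb; ring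
    have hb : -(k : ℤ) ≤ bb p (k + 1) := by unfold bb; push_cast; omega
    rw [e]
    unfold GG
    rcases WW_succ l p k with ⟨a1, a2, a3⟩ | ⟨a1, a2, a3⟩
    · have : bb (QQ l p) k = WW l p k - l := by omega
      rw [a2, a3, this]; ring
    · have : bb (QQ l p) k = bb p (k + 1) := by omega
      rw [a2, a3, this]; ring

lemma mullLen_eq {l : ℕ} (hl : 2 ≤ l) {p : ℕ → ℕ} (hp : IsPartition p) :
    (mullLen l p : ℤ) = ss l p := by
  have hq := QQ_part hl hp
  obtain ⟨r, hr⟩ : ∃ r, plen p = r := ⟨_, rfl⟩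
  have d1 := pdeg_eq hp hr.le
  have d2 := pdeg_eq hq (le_trans (plen_QQ_le hl hp) hr.le)
  have hle : pdeg (QQ l p) + r ≤ pdeg p := by
    rw [d1, d2]
    have : ∑ i ∈ Finset.range r, (QQ l p i + 1) ≤ ∑ i ∈ Finset.range r, p i := by
      apply Finset.sum_le_sum
      intro i hi
      exact QQ_lt hl hp (by simpa [hr] using hi)
    simpa [Finset.sum_add_distrib] using this
  have he : (elen l p : ℤ) = ∑ i ∈ Finset.range r, ((p i : ℤ) - QQ l p i) := by
    rw [elen, remove_eq hl hp, Finset.sum_sub_distrib, Nat.cast_sub (by omega), d1, d2]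
    push_cast
    ring
  have hle' : r ≤ elen l p := by
    rw [elen, remove_eq hl hp]; omega
  rcases r with _ | r
  · have e0 : elen l p = 0 := by
      have : (elen l p : ℤ) = 0 := by rw [he]; simp
      exact_mod_cast this
    have := plen_zero hp hr.le
    simp [mullLen, e0, ss, hr, GG, JJ, WW, bb, this]
  · rw [Finset.sum_range_succ, sum_diff hl hp r (by omega)] at he
    have hpos := plen_pos (show r < plen p by omega)
    have hz := plen_zero hp hr.le
    have w := WW_bounds hl hp r
    have h1 := QQ_eq l p r
    have hb : bb p (r + 1) = -(r + 1 : ℤ) := by unfold bb; rw [hz]; push_cast; ring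
    have hbr : bb p r = p r - r := rfl
    have hqr : bb (QQ l p) r = QQ l p r - r := rfl
    have s1 := WW_succ l p r
    rw [hb] at h1 s1
    have hss : ss l p = GG l p (r + 1) := by rw [ss, hr]
    rw [hss]
    unfold GG at *
    by_cases hc : (l : ℤ) ≤ WW l p r + r
    · have e1 : (elen l p : ℤ) = (JJ l p r + 1) * l := by
        have : (QQ l p r : ℤ) = WW l p r - l + r := by omega
        rw [he, this, hbr]; ring
      have hdvd : l ∣ elen l p := by
        have : (l : ℤ) ∣ (elen l p : ℤ) := ⟨JJ l p r + 1, by rw [e1]; ring⟩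
        exact_mod_cast this
      rw [mullLen, if_pos hdvd, hr, Nat.cast_sub hle', e1]
      rcases s1 with ⟨a1, a2, a3⟩ | ⟨a1, a2, a3⟩
      · rw [a2, a3]; push_cast; ring
      · omega
    · have e1 : (elen l p : ℤ) = JJ l p r * l + (WW l p r + r) := by
        have : (QQ l p r : ℤ) = 0 := by omega
        rw [he, this, hbr]; ring
      have hdvd : ¬ l ∣ elen l p := by
        intro hd
        have : (l : ℤ) ∣ (elen l p : ℤ) := by exact_mod_cast hd
        rw [e1] at this
        have h2 : (l : ℤ) ∣ WW l p r + r := (Int.dvd_add_right (Dvd.intro_left _ rfl)).1 this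
        have := Int.le_of_dvd (by omega) h2
        omega
      rw [mullLen, if_neg hdvd, hr]
      push_cast
      rw [Nat.cast_sub hle', e1]
      rcases s1 with ⟨a1, a2, a3⟩ | ⟨a1, a2, a3⟩
      · have : WW l p r = l - (r + 1) := by omega
        rw [a2, a3, this]; push_cast; ring
      · rw [a2, a3]; push_cast; ring

/-! ### The Mullineux map has the prescribed length -/

lemma mullAux_spec {l : ℕ} (hl : 2 ≤ l) (n : ℕ) : ∀ p : ℕ → ℕ, IsPartition p →
    IsLRegular l p → pdeg p ≤ n →
    IsPartition (mullAux l n p) ∧ IsLRegular l (mullAux l n p) ∧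
      (plen (mullAux l n p) : ℤ) = ss l p := by
  have zero_case : ∀ p : ℕ → ℕ, IsPartition p → p 0 = 0 →
      IsPartition (fun _ => 0) ∧ IsLRegular l (fun _ => 0) ∧
      (plen (fun _ => 0) : ℤ) = ss l p := by
    intro p hp h0
    refine ⟨⟨fun _ _ _ => le_rfl, 0, fun _ _ => rfl⟩, fun i hi => absurd rfl hi, ?_⟩
    have h1 : plen (fun _ => 0) = 0 := Nat.le_zero.1 (plen_le rfl)
    have h2 : plen p = 0 := Nat.le_zero.1 (plen_le h0)
    simp [h1, ss, h2, GG, JJ, WW, bb, h0]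
  induction n with
  | zero =>
    intro p hp hr hn
    have h0 : p 0 = 0 := by
      by_contra h
      have hlen : 0 < plen p := by
        by_contra h'
        exact h (plen_zero hp (by omega))
      have : p 0 ≤ pdeg p := by
        unfold pdeg
        exact Finset.single_le_sum (f := p) (fun _ _ => Nat.zero_le _) (Finset.mem_range.2 hlen)
      omega
    simpa only [mullAux] using zero_case p hp h0
  | succ n ih =>
    intro p hp hr hn
    simp only [mullAux]
    split_ifs with h0
    · exact zero_case p hp h0
    · have hq := QQ_part hl hp
      have hqr := QQ_reg hl hp hr
      have hlen : 0 < plen p := by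
        by_contra h'
        exact h0 (plen_zero hp (by omega))
      have hdeg : pdeg (QQ l p) < pdeg p := by
        rw [pdeg_eq hq (plen_QQ_le hl hp), pdeg]
        apply Finset.sum_lt_sum_of_nonempty
        · exact ⟨0, Finset.mem_range.2 hlen⟩
        · intro i hi
          exact QQ_lt hl hp (Finset.mem_range.1 hi)
      rw [remove_eq hl hp]
      obtain ⟨k1, k2, k3⟩ := ih (QQ l p) hq hqr (by omega)
      have hc := ss_compare hl hp
      have hm := mullLen_eq hl hp
      obtain ⟨μ, m1, m2, m3, m4⟩ := exists_add hl k1 k2 (mullLen l p) (by omega) (by omega)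
      have hex : ∃ μ : ℕ → ℕ, IsPartition μ ∧ IsLRegular l μ ∧
          removeLEdge l μ = mullAux l n (QQ l p) ∧ plen μ = mullLen l p :=
        ⟨μ, m1, m2, by rw [remove_eq hl m1, m3], m4⟩
      have hs := Classical.epsilon_spec hex
      refine ⟨hs.1, hs.2.1, ?_⟩
      rw [hs.2.2.2, hm]

lemma mull_len {l : ℕ} (hl : 2 ≤ l) {p : ℕ → ℕ} (hp : IsPartition p) (hr : IsLRegular l p) :
    (plen (mull l p) : ℤ) = ss l p := (mullAux_spec hl _ p hp hr le_rfl).2.2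

/-! ### Sums of distinguished partitions -/

def SD (l m : ℕ) (p : ℕ → ℕ) : Prop :=
  ∃ (t : ℕ) (ms : Fin t → ℕ) (lam : Fin t → (ℕ → ℕ)),
    (∀ i, 0 < ms i ∧ ms i < l ∧ IsDistinguished l (ms i) (lam i)) ∧
    (∑ i, ms i) = m ∧ ∀ k, p k = ∑ i, lam i k

lemma SD_zero (l : ℕ) : SD l 0 (fun _ => 0) :=
  ⟨0, fun _ => 0, fun _ _ => 0, fun i => i.elim0, by simp, by simp⟩

lemma SD_one {l m : ℕ} {p : ℕ → ℕ} (h0 : 0 < m) (h1 : m < l) (h : IsDistinguished l m p) :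
    SD l m p :=
  ⟨1, fun _ => m, fun _ => p, fun _ => ⟨h0, h1, h⟩, by simp, by simp⟩

lemma SD_add {l m1 m2 : ℕ} {p1 p2 : ℕ → ℕ} (h1 : SD l m1 p1) (h2 : SD l m2 p2) :
    SD l (m1 + m2) (fun k => p1 k + p2 k) := by
  obtain ⟨t1, ms1, lam1, a1, b1, c1⟩ := h1
  obtain ⟨t2, ms2, lam2, a2, b2, c2⟩ := h2
  refine ⟨t1 + t2, Fin.append ms1 ms2, Fin.append lam1 lam2, ?_, ?_, ?_⟩
  · intro i
    refine Fin.addCases (fun i => ?_) (fun i => ?_) i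
    · simpa using a1 i
    · simpa using a2 i
  · rw [Fin.sum_univ_add]
    simp [b1, b2]
  · intro k
    rw [Fin.sum_univ_add]
    simp [c1, c2]

lemma SD_congr {l m : ℕ} {p q : ℕ → ℕ} (h : SD l m p) (e : ∀ k, p k = q k) : SD l m q := by
  have : p = q := funext e
  rwa [← this]

def FF (l m : ℕ) (q : ℕ → ℕ) (C : ℕ) : Prop :=
  ∀ pb, IsPartition pb → pb 0 ≤ C → SD l m (fun k => q k + l * pb k)

lemma min_part {p : ℕ → ℕ} (hp : IsPartition p) (c : ℕ) : IsPartition (fun k => min (p k) c) := by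
  obtain ⟨h1, N, hN⟩ := hp
  refine ⟨fun i j hij => ?_, N, fun i hi => ?_⟩
  · have := h1 i j hij
    try simp only
    omega
  · simp [hN i hi]

lemma sub_part {p : ℕ → ℕ} (hp : IsPartition p) (c : ℕ) : IsPartition (fun k => p k - c) := by
  obtain ⟨h1, N, hN⟩ := hp
  refine ⟨fun i j hij => ?_, N, fun i hi => ?_⟩
  · have := h1 i j hij
    try simp only
    omega
  · simp [hN i hi]

lemma FF_add {l m1 m2 C1 C2 : ℕ} {q1 q2 : ℕ → ℕ} (h1 : FF l m1 q1 C1) (h2 : FF l m2 q2 C2) :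
    FF l (m1 + m2) (fun k => q1 k + q2 k) (C1 + C2) := by
  intro pb hpb hb
  have a := h1 _ (min_part hpb C1) (by simp)
  have b := h2 _ (sub_part hpb C1) (by (try simp only); omega)
  refine SD_congr (SD_add a b) (fun k => ?_)
  have : pb k = min (pb k) C1 + (pb k - C1) := by omega
  have e : l * pb k = l * min (pb k) C1 + l * (pb k - C1) := by rw [← mul_add, ← this]
  try simp only
  omega

lemma FF_congr {l m C : ℕ} {p q : ℕ → ℕ} (h : FF l m p C) (e : ∀ k, p k = q k) : FF l m q C := by
  have : p = q := funext e
  rwa [← this]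

/-- a restricted distinguished partition absorbs `m - 1` columns -/
lemma FF_dist {l m : ℕ} {q : ℕ → ℕ} (h0 : 0 < m) (h1 : m < l) (k : ℕ) (a : ℕ → ℕ)
    (ha : ∀ i j, i ≤ j → a j ≤ a i) (ha0 : a 0 < l - m) (ham : ∀ i, m ≤ i → a i = 0)
    (hq : ∀ i, q i = if i < k then l - m else a (i - k)) : FF l m q (m - 1) := by
  intro pb hpb hb
  apply SD_one h0 h1
  exact ⟨k, a, pb, hpb, by omega, ha, ha0, ham, fun i => by (try simp only); rw [hq]⟩

lemma FF_block {l : ℕ} (hl : 2 ≤ l) : FF l l (fun _ => 0) (l - 1) := by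
  intro pb hpb hb
  have hz : IsPartition (fun _ => 0) := ⟨fun _ _ _ => le_rfl, 0, fun _ _ => rfl⟩
  have a : SD l 1 (fun i => (if i < plen pb then l - 1 else 0)) := by
    apply SD_one (by omega) (by omega)
    exact ⟨plen pb, fun _ => 0, fun _ => 0, hz, by simp, fun _ _ _ => le_rfl, by (try simp only); omega,
      fun _ _ => rfl, fun i => by simp⟩
  have b : SD l (l - 1) (fun i => (if i < plen pb then 1 else 0) + l * (pb i - 1)) := by
    apply SD_one (by omega) (by omega)
    exact ⟨plen pb, fun _ => 0, fun i => pb i - 1, sub_part hpb 1, by (try simp only); omega,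
      fun _ _ _ => le_rfl, by (try simp only); omega,
      fun _ _ => rfl, fun i => by (try simp only); rw [show l - (l - 1) = 1 by omega]⟩
  have c := SD_add a b
  rw [show 1 + (l - 1) = l by omega] at c
  refine SD_congr c (fun k => ?_)
  try simp only
  by_cases hk : k < plen pb
  · have := plen_pos hk
    rw [if_pos hk, if_pos hk]
    obtain ⟨x, hx⟩ : ∃ x, pb k = x + 1 := ⟨pb k - 1, by omega⟩
    rw [hx, mul_add]
    simp only [Nat.add_sub_cancel]
    omega
  · have := plen_zero hpb (i := k) (by omega)
    simp [hk, this]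

lemma FF_extra {l : ℕ} (hl : 2 ≤ l) (n : ℕ) :
    ∃ C, FF l n (fun _ => 0) C ∧ n * (l - 1) < l * (C + 1) := by
  induction n using Nat.strong_induction_on with
  | _ n ih =>
    rcases Nat.eq_zero_or_pos n with h | h
    · subst h
      refine ⟨0, ?_, by omega⟩
      intro pb hpb hb
      refine SD_congr (SD_zero l) (fun k => ?_)
      have := hpb.1 0 k (Nat.zero_le _)
      have : pb k = 0 := by omega
      simp [this]
    · by_cases hnl : n < l
      · refine ⟨n - 1, FF_dist h hnl 0 (fun _ => 0) (fun _ _ _ => le_rfl) (by (try simp only); omega)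
          (fun _ _ => rfl) (fun i => by simp), ?_⟩
        rw [show n - 1 + 1 = n by omega]
        rw [mul_comm l n]
        exact Nat.mul_lt_mul_of_pos_left (by omega) h
      · obtain ⟨C, h1, h2⟩ := ih (n - l) (by omega)
        refine ⟨l - 1 + C, ?_, ?_⟩
        · have := FF_add (FF_block hl) h1
          rw [show l + (n - l) = n by omega] at this
          exact FF_congr this (fun _ => rfl)
        · obtain ⟨x, rfl⟩ : ∃ x, n = x + l := ⟨n - l, by omega⟩
          obtain ⟨L, rfl⟩ : ∃ L, l = L + 1 := ⟨l - 1, by omega⟩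
          simp only [Nat.add_sub_cancel] at *
          nlinarith

/-! ### Transposes -/

def cj (N : ℕ) (p : ℕ → ℕ) : ℕ → ℕ :=
  fun j => ((Finset.range N).filter fun i => j < p i).card

lemma cj_lt {p : ℕ → ℕ} (hp : ∀ i j, i ≤ j → p j ≤ p i) (N j k : ℕ) :
    k < cj N p j ↔ k < N ∧ j < p k := by
  unfold cj
  constructor
  · intro h
    by_contra hc
    have : ((Finset.range N).filter fun i => j < p i) ⊆ Finset.range k := by
      intro i hi
      simp only [Finset.mem_filter, Finset.mem_range] at *
      by_contra hik
      have := hp k i (by omega)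
      omega
    have := Finset.card_le_card this
    simp only [Finset.card_range] at this
    omega
  · rintro ⟨h1, h2⟩
    have : Finset.range (k + 1) ⊆ ((Finset.range N).filter fun i => j < p i) := by
      intro i hi
      simp only [Finset.mem_filter, Finset.mem_range] at *
      have := hp i k (by omega)
      omega
    have := Finset.card_le_card this
    simp only [Finset.card_range] at this
    omega

lemma cj_add (h N : ℕ) (p : ℕ → ℕ) (j : ℕ) : cj (h + N) p j = cj h p j + cj N (sh h p) j := by
  induction N with
  | zero => simp [cj]
  | succ N ih =>
    have e : ∀ (M : ℕ) (q : ℕ → ℕ), cj (M + 1) q j = cj M q j + if j < q M then 1 else 0 := by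
      intro M q
      unfold cj
      rw [Finset.range_add_one, Finset.filter_insert]
      split_ifs
      · rw [Finset.card_insert_of_notMem (by simp)]
      · rfl
    rw [← add_assoc, e, e, ih]
    have e2 : sh h p N = p (h + N) := by simp [sh, add_comm]
    rw [e2]
    omega

lemma conj_lt {p : ℕ → ℕ} (hp : IsPartition p) (j k : ℕ) : k < conjP p j ↔ j < p k := by
  have := cj_lt hp.1 (plen p) j k
  change k < cj (plen p) p j ↔ _
  rw [this]
  constructor
  · exact fun h => h.2
  · intro h
    refine ⟨?_, h⟩
    by_contra hc
    have := plen_zero hp (i := k) (by omega)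
    omega

lemma conj_part {p : ℕ → ℕ} (hp : IsPartition p) : IsPartition (conjP p) := by
  refine ⟨fun i j hij => ?_, p 0, fun i hi => ?_⟩
  · by_contra h
    push Not at h
    have := (conj_lt hp _ _).1 h
    have := (conj_lt hp i (conjP p i)).2 (by omega)
    omega
  · by_contra h
    have := (conj_lt hp i 0).1 (by omega)
    omega

lemma conj_conj {p : ℕ → ℕ} (hp : IsPartition p) : conjP (conjP p) = p := by
  funext i
  apply eq_of_forall_lt_iff
  intro c
  rw [conj_lt (conj_part hp), conj_lt hp]

lemma plen_conj {p : ℕ → ℕ} (hp : IsPartition p) : plen (conjP p) = p 0 := by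
  apply plen_eq
  · by_contra h
    have := (conj_lt hp (p 0) 0).1 (by omega)
    omega
  · intro i hi
    have := (conj_lt hp i 0).2 hi
    omega

lemma conj_reg {l : ℕ} (hl : 2 ≤ l) {p : ℕ → ℕ} (hp : IsPartition p) (hr : IsLRestricted l p) :
    IsLRegular l (conjP p) := by
  intro i hi heq
  obtain ⟨k, hk⟩ : ∃ k, conjP p i = k + 1 := ⟨conjP p i - 1, by omega⟩
  have h1 := (conj_lt hp (i + l - 1) k).1 (by omega)
  have h2 : ¬ i < p (k + 1) := fun h => by
    have := (conj_lt hp i (k + 1)).2 h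
    omega
  have := hr k
  omega

/-! ### Decomposition along segments -/

/-- a block of `h` rows -/
lemma FF_seg {l h : ℕ} {p : ℕ → ℕ} (hp : ∀ i j, i ≤ j → p j ≤ p i) (h1 : 1 ≤ h) (hlt : h < l)
    (hw : p 0 ≤ p (h - 1) + (l - h)) : FF l (l - h) (cj h p) (l - h - 1) := by
  have hanti : ∀ i j, i ≤ j → cj h p j ≤ cj h p i := by
    intro i j hij
    by_contra hc
    push Not at hc
    have := (cj_lt hp h j _).1 hc
    have := (cj_lt hp h i (cj h p i)).2 ⟨this.1, by omega⟩
    omega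
  have hle : ∀ i, cj h p i ≤ h := by
    intro i
    by_contra hc
    push Not at hc
    have := (cj_lt hp h i h).1 hc
    omega
  refine FF_dist (by omega) (by omega) (p (h - 1)) (fun i => cj h p (i + p (h - 1)))
    (fun i j hij => hanti _ _ (by omega)) ?_ ?_ ?_
  · have : ¬ (h - 1 < cj h p (0 + p (h - 1))) := by
      rw [cj_lt hp]
      omega
    try simp only
    omega
  · intro i hi
    by_contra hc
    have := (cj_lt hp h (i + p (h - 1)) 0).1 (by omega)
    omega
  · intro i
    split_ifs with hi
    · have := (cj_lt hp h i (h - 1)).2 ⟨by omega, hi⟩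
      have := hle i
      omega
    · try simp only
      rw [show i - p (h - 1) + p (h - 1) = i by omega]

lemma decomp {l : ℕ} (hl : 2 ≤ l) (N : ℕ) : ∀ p : ℕ → ℕ, IsPartition p → IsLRegular l p →
    plen p ≤ N → ∃ M : ℕ, (M : ℤ) = ss l p ∧ ∀ n, ∃ C, FF l (M + n) (cj (plen p) p) C ∧
      (M + n) * (l - 1) < l * (C + 1) + plen p := by
  induction N with
  | zero =>
    intro p hp hr hN
    have h0 : plen p = 0 := by omega
    have := plen_zero hp h0.le
    refine ⟨0, by simp [ss, h0, GG, JJ, WW, bb, this], fun n => ?_⟩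
    obtain ⟨C, c1, c2⟩ := FF_extra hl n
    rw [h0, Nat.zero_add]
    exact ⟨C, FF_congr c1 (fun k => by simp [cj]), by omega⟩
  | succ N ih =>
    intro p hp hr hN
    by_cases h0 : plen p = 0
    · exact ih p hp hr (by omega)
    obtain ⟨h, h1, h2, h3⟩ := exists_seg l hp
    have hp0 := plen_pos (show 0 < plen p by omega)
    have hb0 : bb p 0 = p 0 := by simp [bb]
    have hhl : h < l := by
      by_contra hc
      have := h3 (l - 1) (by omega) (by omega)
      have h5 := reg_bb hl hp hr hp0.ne'
      rw [Nat.zero_add] at h5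
      omega
    obtain ⟨r, hrr⟩ : ∃ r, plen p = r := ⟨_, rfl⟩
    by_cases hhr : h ≤ r
    · -- a full segment
      have hsh := sh_part hp h
      have hlen : plen (sh h p) = r - h := by
        apply plen_eq
        · simp only [sh]
          exact plen_zero hp (by omega)
        · intro i hi
          have := plen_pos (p := p) (i := i + h) (by omega)
          simp only [sh]
          omega
      have hshr : IsLRegular l (sh h p) := by
        intro i hi
        have := hr (i + h) hi
        rw [show i + h + l - 1 = i + l - 1 + h by omega] at this
        exact this
      obtain ⟨M, m1, m2⟩ := ih _ hsh hshr (by omega)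
      have hs := seg_shift h1 h2 h3 (r - h)
      rw [show r - h + h = r by omega] at hs
      refine ⟨(l - h) + M, ?_, ?_⟩
      · rw [ss, hrr, GG, hs.1, hs.2]
        rw [ss, hlen, GG] at m1
        push_cast
        rw [m1, Nat.cast_sub hhl.le]
        ring
      · intro n
        obtain ⟨C, c1, c2⟩ := m2 n
        have hseg := FF_seg hp.1 h1 hhl (by
          rcases Nat.eq_or_lt_of_le h1 with e | e
          · subst e; simp
          · have := h3 (h - 1) (by omega) (by omega)
            have := hp.1 0 (h - 1) (Nat.zero_le _)
            unfold bb at *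
            omega)
        refine ⟨(l - h - 1) + C, ?_, ?_⟩
        · have := FF_add hseg c1
          rw [show l - h + M + n = l - h + (M + n) by omega]
          refine FF_congr this (fun k => ?_)
          try simp only
          rw [hlen, ← cj_add, hrr, show h + (r - h) = r by omega]
        · rw [hlen] at c2
          rw [hrr]
          obtain ⟨x, rfl⟩ : ∃ x, r = h + x := ⟨r - h, by omega⟩
          obtain ⟨y, rfl⟩ : ∃ y, l = h + y + 1 := ⟨l - h - 1, by omega⟩
          rw [show h + y + 1 - h = y + 1 by omega, show y + 1 - 1 = y by omega]
          rw [show h + x - h = x by omega] at c2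
          rw [show h + y + 1 - 1 = h + y by omega] at *
          nlinarith
    · -- a short final segment
      have hz : p h = 0 := plen_zero hp (by omega)
      have hge : l < p 0 + r + 1 ∨ p 0 + r ≤ l := by omega
      have hpl : p 0 + r ≤ l := by
        have := h3 r (by omega) (by omega)
        have hz : p r = 0 := plen_zero hp (by omega)
        unfold bb at *
        omega
      have hpl' : p 0 + r < l + 0 ∨ p 0 + r = l := by omega
      obtain ⟨a, b⟩ := seg_const h3 r (by omega)
      refine ⟨p 0, by rw [ss, hrr, GG, a, b, hb0]; ring, fun n => ?_⟩
      rw [hrr]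
      by_cases hn : p 0 + n + r < l
      · refine ⟨p 0 + n - 1, ?_, ?_⟩
        · refine FF_dist (by omega) (by omega) 0 (cj r p) ?_ ?_ ?_ (fun i => by simp)
          · intro i j hij
            by_contra hc
            push Not at hc
            have := (cj_lt hp.1 r j _).1 hc
            have := (cj_lt hp.1 r i (cj r p i)).2 ⟨this.1, by omega⟩
            omega
          · have : ¬ r < cj r p 0 := by rw [cj_lt hp.1]; omega
            omega
          · intro i hi
            by_contra hc
            have := (cj_lt hp.1 r i 0).1 (by omega)
            omega
        · rw [show p 0 + n - 1 + 1 = p 0 + n by omega]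
          obtain ⟨L, rfl⟩ : ∃ L, l = L + 1 := ⟨l - 1, by omega⟩
          simp only [Nat.add_sub_cancel]
          nlinarith
      · obtain ⟨C, c1, c2⟩ := FF_extra hl (p 0 + n + r - l)
        have hseg := FF_seg hp.1 (show 1 ≤ r by omega) (show r < l by omega) (by omega)
        refine ⟨(l - r - 1) + C, ?_, ?_⟩
        · have := FF_add hseg c1
          rw [show l - r + (p 0 + n + r - l) = p 0 + n by omega] at this
          exact FF_congr this (fun k => by simp)
        · obtain ⟨x, hx⟩ : ∃ x, p 0 + n + r = l + x := ⟨p 0 + n + r - l, by omega⟩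
          obtain ⟨y, rfl⟩ : ∃ y, l = r + y + 1 := ⟨l - r - 1, by omega⟩
          rw [show p 0 + n = y + 1 + x by omega]
          rw [show p 0 + n + r - (r + y + 1) = x by omega] at c2
          rw [show r + y + 1 - r - 1 = y by omega]
          rw [show r + y + 1 - 1 = r + y by omega] at *
          nlinarith

lemma final {l : ℕ} (hl : 2 ≤ l) {m : ℕ} {p p0 pb : ℕ → ℕ}
    (hp0 : IsPartition p0) (hres : IsLRestricted l p0)
    (hpb : IsPartition pb) (hsum : ∀ k, p k = p0 k + l * pb k)
    (hspec : plen (mull l (conjP p0)) ≤ m)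
    (hbd : p 0 ≤ m * (l - 1)) : SD l m p := by
  have hc := conj_part hp0
  have hcr := conj_reg hl hp0 hres
  have hm := mull_len hl hc hcr
  obtain ⟨M, m1, m2⟩ := decomp hl _ _ hc hcr le_rfl
  have hM : M ≤ m := by omega
  obtain ⟨C, c1, c2⟩ := m2 (m - M)
  rw [show M + (m - M) = m by omega] at c1 c2
  have e : cj (plen (conjP p0)) (conjP p0) = p0 := conj_conj hp0
  rw [e] at c1
  rw [plen_conj hp0] at c2
  have hs0 := hsum 0
  have hb : pb 0 ≤ C := by
    have : l * pb 0 < l * (C + 1) := by omega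
    have := Nat.lt_of_mul_lt_mul_left this
    omega
  exact SD_congr (c1 pb hpb hb) (fun k => (hsum k).symm)

end MullDist

/-- Let `m ≥ 1` and let `λ = λ⁰ + lλ̄` be a partition with `λ⁰` `l`-restricted and `λ̄` a
partition. If `ℓ(Mull((λ⁰)')) ≤ m` (i.e. `λ⁰` is `m`-special) and `λ_1 ≤ m(l-1)`, then
`λ = λ(1) + … + λ(s)` where each `λ(i)` is an `m_i`-distinguished partition (not
necessarily `l`-restricted) for some `0 < m_i < l`, and `m = m_1 + … + m_s`. -/
theorem sum_of_distinguished_of_special_bounded (l : ℕ) (hl : 2 ≤ l)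
    (m : ℕ) (hm : 1 ≤ m) (p p0 pb : ℕ → ℕ)
    (hp0 : IsPartition p0) (hres : IsLRestricted l p0)
    (hpb : IsPartition pb) (hsum : ∀ k, p k = p0 k + l * pb k)
    (hspec : plen (mull l (conjP p0)) ≤ m)
    (hbd : p 0 ≤ m * (l - 1)) :
    ∃ (t : ℕ) (ms : Fin t → ℕ) (lam : Fin t → (ℕ → ℕ)),
      (∀ i, 0 < ms i ∧ ms i < l ∧ IsDistinguished l (ms i) (lam i)) ∧
      (∑ i, ms i) = m ∧ ∀ k, p k = ∑ i, lam i k := by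
  exact MullDist.final hl hp0 hres hpb hsum hspec hbd
end
end
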